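/- arXiv:2503.06694 — 3 statements merged into one kernel-verified Lean document; each statement's English description precedes it below -/
import Mathlib

section
/- Let L = ⊕_{i∈ℤ} L_i be a nonzero ℤ-graded Lie conformal algebra that is perfect (i.e. [L_λ L] = L) and rootless. Then L is not of finite type. -/
open scoped BigOperators Classical ENNReal
open Polynomial

noncomputable section

/-- A Lie conformal algebra over `ℂ`, encoded via its `n`-th products
`a_(n) b` and the operator `∂ = D`.  The `λ`-bracket is
`[a_λ b] = ∑ₙ (λⁿ/n!) • (a_(n) b)`. -/
structure LieConformalAlgebra (L : Type) [AddCommGroup L] [Module ℂ L] : Type where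
  D : L →ₗ[ℂ] L
  prd : ℕ → L →ₗ[ℂ] L →ₗ[ℂ] L
  bound : ∀ a b : L, ∃ N : ℕ, ∀ n : ℕ, N ≤ n → prd n a b = 0
  sesq : ∀ (n : ℕ) (a b : L), prd n (D a) b = (-(n : ℂ)) • prd (n - 1) a b
  sesq' : ∀ (n : ℕ) (a b : L),
    prd n a (D b) = D (prd n a b) + (n : ℂ) • prd (n - 1) a b
  skew : ∀ (n : ℕ) (a b : L),
    prd n a b
      = - ∑ᶠ j : ℕ, ((-1 : ℂ) ^ (n + j) * ((Nat.factorial j : ℂ))⁻¹) • (⇑D)^[j] (prd (n + j) b a)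
  jacobi : ∀ (m n : ℕ) (a b c : L),
    prd m a (prd n b c) - prd n b (prd m a c)
      = ∑ j ∈ Finset.range (m + 1), (Nat.choose m j : ℂ) • prd (m + n - j) (prd j a b) c

namespace LieConformalAlgebra

variable {L : Type} [AddCommGroup L] [Module ℂ L]

/-- The action of a polynomial `q(∂) ∈ ℂ[∂]` on an element. -/
def applyP (C : LieConformalAlgebra L) (q : Polynomial ℂ) (x : L) : L :=
  q.sum fun k c => c • (⇑C.D)^[k] x

/-- `[a_λ b] = p(∂, λ) • t`, where `p ∈ ℂ[∂][λ]` is a two-variable polynomial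
(outer variable `λ`, inner variable `∂`). -/
def BracketEq (C : LieConformalAlgebra L) (a b t : L) (p : Polynomial (Polynomial ℂ)) : Prop :=
  ∀ n : ℕ, C.prd n a b = (Nat.factorial n : ℂ) • C.applyP (p.coeff n) t

def IsSubalgebra (C : LieConformalAlgebra L) (N : Submodule ℂ L) : Prop :=
  (∀ x ∈ N, C.D x ∈ N) ∧ ∀ n : ℕ, ∀ a ∈ N, ∀ b ∈ N, C.prd n a b ∈ N

def IsIdeal (C : LieConformalAlgebra L) (N : Submodule ℂ L) : Prop :=
  (∀ x ∈ N, C.D x ∈ N) ∧ ∀ (n : ℕ) (a : L), ∀ b ∈ N, C.prd n a b ∈ N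

/-- `L` is finitely generated as a Lie conformal algebra (finite type). -/
def FiniteType (C : LieConformalAlgebra L) : Prop :=
  ∃ s : Finset L, ∀ N : Submodule ℂ L, C.IsSubalgebra N → (s : Set L) ⊆ (N : Set L) → N = ⊤

/-- `L` is finitely generated as a `ℂ[∂]`-module. -/
def FGPolyModule (C : LieConformalAlgebra L) : Prop :=
  ∃ s : Finset L, ∀ N : Submodule ℂ L, (∀ x ∈ N, C.D x ∈ N) → (s : Set L) ⊆ (N : Set L) → N = ⊤

/-- Iterated adjoint action `a₁_(k₁)(a₂_(k₂)(⋯ x))`. -/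
def iterPrd (C : LieConformalAlgebra L) : List (L × ℕ) → L → L
  | [], x => x
  | (a, k) :: t, x => C.prd k a (iterPrd C t x)

/-- The `ℂ[∂]`-rank of the submodule `N` is at most `r`:
any `r+1` elements of `N` are `ℂ[∂]`-linearly dependent. -/
def polyRankLE (C : LieConformalAlgebra L) (N : Submodule ℂ L) (r : ℕ) : Prop :=
  ∀ v : Fin (r + 1) → L, (∀ k, v k ∈ N) →
    ∃ q : Fin (r + 1) → Polynomial ℂ, (∃ k, q k ≠ 0) ∧ ∑ k, C.applyP (q k) (v k) = 0

/-- The family `v` is a free `ℂ[∂]`-basis of `L`. -/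
def IsFreePolyBasis (C : LieConformalAlgebra L) {ι : Type} (v : ι → L) : Prop :=
  LinearIndependent ℂ (fun q : ι × ℕ => (⇑C.D)^[q.2] (v q.1)) ∧
  Submodule.span ℂ (Set.range fun q : ι × ℕ => (⇑C.D)^[q.2] (v q.1)) = ⊤

/-- `[U_λ V]`: the `ℂ`-span of all `u_(n) v`. -/
def bspan (C : LieConformalAlgebra L) (U V : Set L) : Submodule ℂ L :=
  Submodule.span ℂ {x : L | ∃ (n : ℕ) (u : L) (w : L), u ∈ U ∧ w ∈ V ∧ x = C.prd n u w}

end LieConformalAlgebra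

/-- `∂` as an element of `ℂ[∂][λ]`. -/
def Pd : Polynomial (Polynomial ℂ) := Polynomial.C Polynomial.X
/-- `λ` as an element of `ℂ[∂][λ]`. -/
def Pl : Polynomial (Polynomial ℂ) := Polynomial.X
/-- a constant in `ℂ[∂][λ]`. -/
def Pc (a : ℂ) : Polynomial (Polynomial ℂ) := Polynomial.C (Polynomial.C a)

/-- Total degree of a two-variable polynomial in `ℂ[∂][λ]`. -/
def tdeg (p : Polynomial (Polynomial ℂ)) : ℕ :=
  p.support.sup fun n => n + (p.coeff n).natDegree

section ModelPolynomials

/-- structure polynomials of `𝒱(s)` -/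
def pV (s : ℂ) (i j : ℤ) : Polynomial (Polynomial ℂ) :=
  Pd + Pc 2 * Pl + Pc (s * ((i : ℂ) - (j : ℂ)))

/-- structure polynomials of `CL₁(s)` -/
def pCL1 (s : ℂ) (i j : ℤ) : Polynomial (Polynomial ℂ) :=
  Pc ((i : ℂ) + 1) * Pd + Pc ((i : ℂ) + (j : ℂ) + 2) * Pl + Pc (s * ((i : ℂ) - (j : ℂ)))

/-- structure polynomials of `CL₂(b,s)` -/
def pCL2 (b s : ℂ) (i j : ℤ) : Polynomial (Polynomial ℂ) :=
  Pc ((i : ℂ) + b) * Pd + Pc ((i : ℂ) + (j : ℂ) + 2 * b) * Pl + Pc (s * ((i : ℂ) - (j : ℂ)))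

/-- structure polynomials of `SCL₂(b,s)` (for `2b ∈ ℤ`), w.r.t. the basis
`L'ᵢ = Lᵢ (i ≠ -2b)`, `L'_{-2b} = (∂+2s)L_{-2b}` of the corresponding graded
subalgebra of `CL₂(b,s)`. -/
def pSCL2 (b s : ℂ) (i j : ℤ) : Polynomial (Polynomial ℂ) :=
  (if (i : ℂ) = -(2 * b) then Pc (2 * s) - Pl else 1) *
  (if (j : ℂ) = -(2 * b) then Pd + Pl + Pc (2 * s) else 1) *
  (if (i : ℂ) + (j : ℂ) = -(2 * b) then Pc ((i : ℂ) + b) else pCL2 b s i j)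

/-- structure polynomials of `CL₃(s)` -/
def pCL3 (s : ℂ) (i j : ℤ) : Polynomial (Polynomial ℂ) :=
  if i + j = 0 then Pc (i : ℂ) * (Pd + Pc s)
  else if i = 0 then Pc (-(j : ℂ)) * (Pc (2 * s) - Pl)
  else if j = 0 then Pc (i : ℂ) * (Pd + Pl + Pc (2 * s))
  else Pc (i : ℂ) * Pd + Pc ((i : ℂ) + (j : ℂ)) * Pl + Pc (s * ((i : ℂ) - (j : ℂ)))

/-- structure polynomials of `ECL(s)` -/
def pECL (s : ℂ) (i j : ℤ) : Polynomial (Polynomial ℂ) :=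
  if i + j = 0 then Pc (i : ℂ) * (Pd + Pc s) * (Pd + Pc (2 * s))
  else if i = 0 then Pc (-(j : ℂ))
  else if j = 0 then Pc (i : ℂ)
  else Pc (i : ℂ) * Pd + Pc ((i : ℂ) + (j : ℂ)) * Pl + Pc (s * ((i : ℂ) - (j : ℂ)))

/-- structure polynomials of `M(1)` (indices `≥ -1`, completed by skew-symmetry) -/
def pM1 (i j : ℤ) : Polynomial (Polynomial ℂ) :=
  if i = 1 ∧ j = 1 then Pd + Pc 2 * Pl
  else if i = -1 ∧ 1 ≤ j then Pc (((j : ℂ) + 1) * ((j : ℂ) - 2) / 2)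
  else if j = -1 ∧ 1 ≤ i then Pc (-(((i : ℂ) + 1) * ((i : ℂ) - 2) / 2))
  else if i = 0 then Pc (-(j : ℂ))
  else if j = 0 then Pc (i : ℂ)
  else if i = 1 ∧ 2 ≤ j then 1
  else if j = 1 ∧ 2 ≤ i then -1
  else 0

/-- structure polynomials of `M(2)` (completed by skew-symmetry) -/
def pM2 (i j : ℤ) : Polynomial (Polynomial ℂ) :=
  if i = 1 ∧ j = 1 then Pd + Pc 2 * Pl
  else if i = -1 ∧ j = -1 then Pd + Pc 2 * Pl
  else if i = 0 then Pc (-(j : ℂ))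
  else if j = 0 then Pc (i : ℂ)
  else if i = -1 ∧ 1 ≤ j then Pc (((j : ℂ) + 1) * ((j : ℂ) - 2) / 2)
  else if j = -1 ∧ 1 ≤ i then Pc (-(((i : ℂ) + 1) * ((i : ℂ) - 2) / 2))
  else if i = 1 ∧ j ≤ -2 then Pc (((j : ℂ) - 1) * ((j : ℂ) + 2) / 2)
  else if j = 1 ∧ i ≤ -2 then Pc (-(((i : ℂ) - 1) * ((i : ℂ) + 2) / 2))
  else if i = -1 ∧ j ≤ -2 then 1
  else if j = -1 ∧ i ≤ -2 then -1
  else if i = 1 ∧ 2 ≤ j then 1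
  else if j = 1 ∧ 2 ≤ i then -1
  else 0

end ModelPolynomials

namespace LieConformalAlgebra

variable {L : Type} [AddCommGroup L] [Module ℂ L]

/-- `C` is isomorphic to the Virasoro Lie conformal algebra. -/
def IsVir (C : LieConformalAlgebra L) : Prop :=
  ∃ e : L, C.IsFreePolyBasis (fun _ : Unit => e) ∧ C.BracketEq e e e (Pd + Pc 2 * Pl)

/-- `C` is isomorphic to the loop Virasoro Lie conformal algebra `𝒱(s)`. -/
def IsV (C : LieConformalAlgebra L) (s : ℂ) : Prop :=
  ∃ v : ℤ → L, C.IsFreePolyBasis v ∧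
    ∀ i j : ℤ, C.BracketEq (v i) (v j) (v (i + j)) (pV s i j)

/-- `C` is isomorphic to `CL₁(s)`. -/
def IsCL1 (C : LieConformalAlgebra L) (s : ℂ) : Prop :=
  ∃ v : ℤ → L, C.IsFreePolyBasis (fun q : {i : ℤ // -1 ≤ i} => v q.1) ∧
    ∀ i j : ℤ, -1 ≤ i → -1 ≤ j →
      C.BracketEq (v i) (v j) (if -1 ≤ i + j then v (i + j) else 0) (pCL1 s i j)

/-- `C` is isomorphic to `CL₂(b,s)`. -/
def IsCL2 (C : LieConformalAlgebra L) (b s : ℂ) : Prop :=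
  ∃ v : ℤ → L, C.IsFreePolyBasis v ∧
    ∀ i j : ℤ, C.BracketEq (v i) (v j) (v (i + j)) (pCL2 b s i j)

/-- `C` is isomorphic to `SCL₂(b,s)`. -/
def IsSCL2 (C : LieConformalAlgebra L) (b s : ℂ) : Prop :=
  ∃ v : ℤ → L, C.IsFreePolyBasis v ∧
    ∀ i j : ℤ, C.BracketEq (v i) (v j) (v (i + j)) (pSCL2 b s i j)

/-- `C` is isomorphic to `CL₃(s)`. -/
def IsCL3 (C : LieConformalAlgebra L) (s : ℂ) : Prop :=
  ∃ v : ℤ → L, C.IsFreePolyBasis v ∧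
    ∀ i j : ℤ, C.BracketEq (v i) (v j) (v (i + j)) (pCL3 s i j)

/-- `C` is isomorphic to `ECL(s)`. -/
def IsECL (C : LieConformalAlgebra L) (s : ℂ) : Prop :=
  ∃ v : ℤ → L, C.IsFreePolyBasis v ∧
    ∀ i j : ℤ, C.BracketEq (v i) (v j) (v (i + j)) (pECL s i j)

/-- `C` is isomorphic to `M(1)`. -/
def IsM1 (C : LieConformalAlgebra L) : Prop :=
  ∃ v : ℤ → L, C.IsFreePolyBasis (fun q : {i : ℤ // -1 ≤ i} => v q.1) ∧
    ∀ i j : ℤ, -1 ≤ i → -1 ≤ j →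
      C.BracketEq (v i) (v j) (if -1 ≤ i + j then v (i + j) else 0) (pM1 i j)

/-- `C` is isomorphic to `M(2)`. -/
def IsM2 (C : LieConformalAlgebra L) : Prop :=
  ∃ v : ℤ → L, C.IsFreePolyBasis v ∧
    ∀ i j : ℤ, C.BracketEq (v i) (v j) (v (i + j)) (pM2 i j)

/-- `C` is isomorphic to the current Lie conformal algebra `Cur 𝔤`. -/
def IsCur (C : LieConformalAlgebra L) (g : Type) [LieRing g] [LieAlgebra ℂ g] : Prop :=
  ∃ φ : g →ₗ[ℂ] L,
    Function.Bijective (fun f : ℕ →₀ g => f.sum fun k x => (⇑C.D)^[k] (φ x)) ∧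
    (∀ x y : g, C.prd 0 (φ x) (φ y) = φ ⁅x, y⁆) ∧
    ∀ n : ℕ, 1 ≤ n → ∀ x y : g, C.prd n (φ x) (φ y) = 0

/-- `C ≅ Cur sl(2,ℂ)`. -/
def IsCurSl2 (C : LieConformalAlgebra L) : Prop :=
  C.IsCur ↥(LieAlgebra.SpecialLinear.sl (Fin 2) ℂ)

/-- `C ≅ Cur 𝒲`, `𝒲` the Witt algebra (basis `wᵢ`, `[wᵢ,wⱼ] = (j-i)w_{i+j}`). -/
def IsCurWitt (C : LieConformalAlgebra L) : Prop :=
  ∃ v : ℤ → L, C.IsFreePolyBasis v ∧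
    (∀ i j : ℤ, C.prd 0 (v i) (v j) = (((j : ℂ) - (i : ℂ))) • v (i + j)) ∧
    ∀ n : ℕ, 1 ≤ n → ∀ i j : ℤ, C.prd n (v i) (v j) = 0

/-- `C ≅ Cur 𝒲₁`, `𝒲₁` spanned by the `wᵢ`, `i ≥ -1`. -/
def IsCurWitt1 (C : LieConformalAlgebra L) : Prop :=
  ∃ v : ℤ → L, C.IsFreePolyBasis (fun q : {i : ℤ // -1 ≤ i} => v q.1) ∧
    (∀ i j : ℤ, -1 ≤ i → -1 ≤ j →
      C.prd 0 (v i) (v j) = (((j : ℂ) - (i : ℂ))) • (if -1 ≤ i + j then v (i + j) else 0)) ∧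
    ∀ n : ℕ, 1 ≤ n → ∀ i j : ℤ, -1 ≤ i → -1 ≤ j → C.prd n (v i) (v j) = 0

end LieConformalAlgebra

/-- A `ℤ`-graded Lie conformal algebra. -/
structure GradedLCA (L : Type) [AddCommGroup L] [Module ℂ L]
    extends LieConformalAlgebra L where
  G : ℤ → Submodule ℂ L
  internal : DirectSum.IsInternal G
  dGrade : ∀ i : ℤ, ∀ x ∈ G i, D x ∈ G i
  prdGrade : ∀ (i j : ℤ) (n : ℕ), ∀ a ∈ G i, ∀ b ∈ G j, prd n a b ∈ G (i + j)

namespace GradedLCA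

variable {L : Type} [AddCommGroup L] [Module ℂ L]

/-- A graded ideal: an ideal generated by homogeneous elements. -/
def IsGradedIdeal (C : GradedLCA L) (N : Submodule ℂ L) : Prop :=
  C.toLieConformalAlgebra.IsIdeal N ∧ (⨆ i : ℤ, N ⊓ C.G i) = N

/-- `L` is simple graded: nonzero bracket, and the only graded ideals are `⊥` and `⊤`. -/
def IsSimpleGraded (C : GradedLCA L) : Prop :=
  (∃ (n : ℕ) (a b : L), C.prd n a b ≠ 0) ∧
  ∀ N : Submodule ℂ L, C.IsGradedIdeal N → N = ⊥ ∨ N = ⊤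

/-- `[L_λ L] = L`. -/
def Perfect (C : GradedLCA L) : Prop :=
  Submodule.span ℂ {x : L | ∃ (n : ℕ) (a b : L), x = C.prd n a b} = ⊤

/-- Each component `L_i` is a nilpotent `L₀`-module under the adjoint action. -/
def Rootless (C : GradedLCA L) : Prop :=
  ∀ i : ℤ, ∃ n : ℕ, 1 ≤ n ∧ ∀ l : List (L × ℕ), l.length = n →
    (∀ q ∈ l, q.1 ∈ C.G 0) → ∀ x ∈ C.G i, C.toLieConformalAlgebra.iterPrd l x = 0

/-- The ranks of the components are uniformly bounded. -/
def UniformlyBounded (C : GradedLCA L) : Prop :=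
  ∃ N : ℕ, 1 ≤ N ∧ ∀ i : ℤ, C.toLieConformalAlgebra.polyRankLE (C.G i) N

end GradedLCA

/-- A module over a Lie conformal algebra, encoded via the `n`-th actions. -/
structure LCAModule {L : Type} [AddCommGroup L] [Module ℂ L] (C : LieConformalAlgebra L)
    (M : Type) [AddCommGroup M] [Module ℂ M] : Type where
  DM : M →ₗ[ℂ] M
  act : ℕ → L →ₗ[ℂ] M →ₗ[ℂ] M
  bound : ∀ (a : L) (m : M), ∃ N : ℕ, ∀ n : ℕ, N ≤ n → act n a m = 0
  sesq : ∀ (n : ℕ) (a : L) (m : M), act n (C.D a) m = (-(n : ℂ)) • act (n - 1) a m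
  sesq' : ∀ (n : ℕ) (a : L) (m : M),
    act n a (DM m) = DM (act n a m) + (n : ℂ) • act (n - 1) a m
  comm : ∀ (p q : ℕ) (a b : L) (m : M),
    act p a (act q b m) - act q b (act p a m)
      = ∑ j ∈ Finset.range (p + 1), (Nat.choose p j : ℂ) • act (p + q - j) (C.prd j a b) m

namespace LCAModule

variable {L : Type} [AddCommGroup L] [Module ℂ L] {C : LieConformalAlgebra L}
variable {M : Type} [AddCommGroup M] [Module ℂ M]

/-- Iterated action `a₁_(k₁)(a₂_(k₂)(⋯ m))`. -/
def iterAct (ρ : LCAModule C M) : List (L × ℕ) → M → M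
  | [], m => m
  | (a, k) :: t, m => ρ.act k a (iterAct ρ t m)

/-- `N` is an `L`-submodule of `M`. -/
def IsSub (ρ : LCAModule C M) (N : Submodule ℂ M) : Prop :=
  (∀ m ∈ N, ρ.DM m ∈ N) ∧ ∀ (n : ℕ) (a : L), ∀ m ∈ N, ρ.act n a m ∈ N

/-- `M` is a nilpotent module. -/
def Nilpotent (ρ : LCAModule C M) : Prop :=
  ∃ n : ℕ, 1 ≤ n ∧ ∀ l : List (L × ℕ), l.length = n → ∀ m : M, ρ.iterAct l m = 0

/-- `M` is finitely generated as an `L`-module. -/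
def FG (ρ : LCAModule C M) : Prop :=
  ∃ s : Finset M, ∀ N : Submodule ℂ M, ρ.IsSub N → (s : Set M) ⊆ (N : Set M) → N = ⊤

/-- The `L`-submodule `N` is finitely generated as an `L`-module. -/
def FGIn (ρ : LCAModule C M) (N : Submodule ℂ M) : Prop :=
  ∃ s : Finset M, (s : Set M) ⊆ (N : Set M) ∧
    ∀ P : Submodule ℂ M, ρ.IsSub P → (s : Set M) ⊆ (P : Set M) → N ≤ P

/-- `M` is finitely generated as a `ℂ[∂]`-module. -/
def FGPoly (ρ : LCAModule C M) : Prop :=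
  ∃ s : Finset M, ∀ N : Submodule ℂ M, (∀ m ∈ N, ρ.DM m ∈ N) → (s : Set M) ⊆ (N : Set M) → N = ⊤

end LCAModule

/-- A family is `ℂ[∂]`-linearly independent. -/
def polyIndep {M : Type} [AddCommGroup M] [Module ℂ M] (DM : M →ₗ[ℂ] M)
    {r : ℕ} (v : Fin r → M) : Prop :=
  ∀ q : Fin r → Polynomial ℂ,
    (∑ k, (q k).sum fun t c => c • (⇑DM)^[t] (v k)) = 0 → ∀ k, q k = 0

/-- The `ℂ[∂]`-rank of a submodule, in `ℕ∞`. -/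
def polyRank {M : Type} [AddCommGroup M] [Module ℂ M] (DM : M →ₗ[ℂ] M)
    (N : Submodule ℂ M) : ℕ∞ :=
  ⨆ r ∈ {r : ℕ | ∃ v : Fin r → M, (∀ k, v k ∈ N) ∧ polyIndep DM v}, (r : ℕ∞)

/-- A graded module over a `ℤ`-graded Lie conformal algebra. -/
structure GradedLCAModule {L : Type} [AddCommGroup L] [Module ℂ L] (C : GradedLCA L)
    (M : Type) [AddCommGroup M] [Module ℂ M]
    extends LCAModule C.toLieConformalAlgebra M where
  GM : ℤ → Submodule ℂ M
  internal : DirectSum.IsInternal GM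
  dGrade : ∀ i : ℤ, ∀ m ∈ GM i, DM m ∈ GM i
  actGrade : ∀ (i j : ℤ) (n : ℕ), ∀ a ∈ C.G i, ∀ m ∈ GM j, act n a m ∈ GM (i + j)

namespace GradedLCAModule

variable {L : Type} [AddCommGroup L] [Module ℂ L] {C : GradedLCA L}
variable {M : Type} [AddCommGroup M] [Module ℂ M]

/-- `Mⁿ = ⊕_{|i| ≤ n} M_i`. -/
def seg (ρ : GradedLCAModule C M) (n : ℕ) : Submodule ℂ M :=
  ⨆ i : ℤ, ⨆ _ : |i| ≤ (n : ℤ), ρ.GM i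

/-- `e(M) = liminf (1/n) rank_{ℂ[∂]} Mⁿ`. -/
def eM (ρ : GradedLCAModule C M) : ℝ≥0∞ :=
  Filter.atTop.liminf fun n : ℕ => (polyRank ρ.DM (ρ.seg n) : ℝ≥0∞) / (n : ℝ≥0∞)

/-- Each `M_i` is a nilpotent `L₀`-module. -/
def Weightless (ρ : GradedLCAModule C M) : Prop :=
  ∀ i : ℤ, ∃ n : ℕ, 1 ≤ n ∧ ∀ l : List (L × ℕ), l.length = n →
    (∀ q ∈ l, q.1 ∈ C.G 0) → ∀ m ∈ ρ.GM i, ρ.toLCAModule.iterAct l m = 0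

/-- The submodule `I(M)` generated by all homogeneous `v` lying in the span of
the iterated actions of `L` on `v`. -/
def IM (ρ : GradedLCAModule C M) : Submodule ℂ M :=
  sInf {N : Submodule ℂ M | ρ.toLCAModule.IsSub N ∧
    {v : M | (∃ i : ℤ, v ∈ ρ.GM i) ∧
      v ∈ Submodule.span ℂ
        {w : M | ∃ l : List (L × ℕ), 1 ≤ l.length ∧ w = ρ.toLCAModule.iterAct l v}} ⊆ N}

end GradedLCAModule

/-- The structure context for graded Lie conformal algebras all of whose
nonzero components are free of rank one over `ℂ[∂]`: fixed homogeneous bases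
`bas i` and structure polynomials `sp i j ∈ ℂ[∂][λ]`, with `0 ∈ Supp(L)` and
`L₀` abelian. -/
structure RankOneContext (L : Type) [AddCommGroup L] [Module ℂ L]
    extends GradedLCA L where
  bas : ℤ → L
  sp : ℤ → ℤ → Polynomial (Polynomial ℂ)
  bas_mem : ∀ i : ℤ, bas i ∈ G i
  bas_zero : ∀ i : ℤ, G i = ⊥ → bas i = 0
  bas_indep : ∀ i : ℤ, G i ≠ ⊥ → LinearIndependent ℂ fun k : ℕ => (⇑D)^[k] (bas i)
  bas_span : ∀ i : ℤ, G i ≠ ⊥ →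
    G i = Submodule.span ℂ (Set.range fun k : ℕ => (⇑D)^[k] (bas i))
  sp_brkt : ∀ (i j : ℤ) (n : ℕ),
    prd n (bas i) (bas j)
      = (Nat.factorial n : ℂ) • (((sp i j).coeff n).sum fun k c => c • (⇑D)^[k] (bas (i + j)))
  sp_zero : ∀ i j : ℤ, (G i = ⊥ ∨ G j = ⊥ ∨ G (i + j) = ⊥) → sp i j = 0
  supp_zero : G 0 ≠ ⊥
  abelian0 : ∀ n : ℕ, ∀ x ∈ G 0, ∀ y ∈ G 0, prd n x y = 0

/-- A Lie conformal algebra of class `𝒱`. -/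
structure ClassV (L : Type) [AddCommGroup L] [Module ℂ L]
    extends RankOneContext L where
  supp_one : G 1 ≠ ⊥
  supp_negone : G (-1) ≠ ⊥
  genV : ∀ N : Submodule ℂ L, (∀ x ∈ N, D x ∈ N) →
    (∀ n : ℕ, ∀ a ∈ N, ∀ b ∈ N, prd n a b ∈ N) →
    G 1 ≤ N → G 0 ≤ N → G (-1) ≤ N → N = ⊤
  ne_m11 : sp (-1) 1 ≠ 0
  ne_01 : sp 0 1 ≠ 0

/-!
Finitely many generators lie in finitely many degrees, so they are contained in `L_{≤ d}`, the sum
of the components of degree at most `d`, for some `d`. Suppose that `L_{≤ d}` generates `L` and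
`d ≥ 1`. If `P` is the subalgebra generated by the components of degrees `0, …, d`, then
`P + L_{< 0}` is a subalgebra containing `L_{≤ d}`, so it is `L`, and therefore `P = L_{≥ 0}`.

Let `N` be the subalgebra generated by `L_{≤ d-1}` and `R = (N ∩ L_d) + [L₀ λ L_d]`. The elements
`a` such that every product `a_(n) b` has its degree-`d` part in `R` form a subalgebra. It contains
the components of degrees `0, …, d`, hence `L_{≥ 0}`, and by skew-symmetry also `L_{< 0}`; so
`L_d = R` because `L` is perfect. Rootlessness gives a Nakayama lemma for `L₀` acting on `L_d`,
which yields `L_d ⊆ N`: already `L_{≤ d-1}` generates `L`.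

Descending to `d = 0` gives `L = L_{≤ 0}`, and the negated grading gives `L = L_{≥ 0}`. So `L = L₀`
is a perfect algebra acting nilpotently on itself, that is, zero.
-/

namespace LieConformalAlgebra

variable {L : Type} [AddCommGroup L] [Module ℂ L] (C : LieConformalAlgebra L)

lemma prd_prd_mem {X : Submodule ℂ L} {a b c : L}
    (hab : ∀ m n, C.prd m a (C.prd n b c) ∈ X) (hba : ∀ m n, C.prd n b (C.prd m a c) ∈ X)
    (m n : ℕ) : C.prd n (C.prd m a b) c ∈ X := by
  induction m using Nat.strong_induction_on generalizing n with
  | _ m ih =>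
    -- The top term `j = m` of the Jacobi identity is the product to be controlled.
    have jacobi := C.jacobi m n a b c
    rw [Finset.sum_range_succ, Nat.choose_self, Nat.cast_one, one_smul,
      Nat.add_sub_cancel_left] at jacobi
    rw [← sub_eq_iff_eq_add'.2 jacobi]
    exact X.sub_mem (X.sub_mem (hab m n) (hba m n)) <|
      X.sum_mem fun j hj => X.smul_mem _ (ih j (Finset.mem_range.1 hj) _)

lemma prd_mem_of_forall_prd_swap_mem {X : Submodule ℂ L} (hX : ∀ x ∈ X, C.D x ∈ X) {a b : L}
    (hba : ∀ n, C.prd n b a ∈ X) (n : ℕ) : C.prd n a b ∈ X := by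
  have iterate_mem (j : ℕ) {x : L} (hx : x ∈ X) : (⇑C.D)^[j] x ∈ X :=
    Set.MapsTo.iterate (s := (X : Set L)) hX j hx
  rw [C.skew]
  exact X.neg_mem <| finsum_induction (· ∈ X) X.zero_mem (fun _ _ => X.add_mem)
    fun j => X.smul_mem _ (iterate_mem j (hba _))

section Subalgebras

/-- The subalgebra of a Lie conformal algebra generated by a set, as a `ℂ`-submodule. -/
def adjoin (s : Set L) : Submodule ℂ L :=
  sInf {N : Submodule ℂ L | C.IsSubalgebra N ∧ s ⊆ N}

lemma subset_adjoin (s : Set L) : s ⊆ C.adjoin s := fun _ hx =>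
  Submodule.mem_sInf.2 fun _ hN => hN.2 hx

lemma le_adjoin (M : Submodule ℂ L) : M ≤ C.adjoin (M : Set L) := C.subset_adjoin _

variable {C} in
lemma adjoin_le {s : Set L} {N : Submodule ℂ L} (hN : C.IsSubalgebra N) (hs : s ⊆ N) :
    C.adjoin s ≤ N :=
  sInf_le ⟨hN, hs⟩

lemma isSubalgebra_adjoin (s : Set L) : C.IsSubalgebra (C.adjoin s) := by
  refine ⟨fun x hx => ?_, fun n a ha b hb => ?_⟩
  · exact Submodule.mem_sInf.2 fun N hN => hN.1.1 x (Submodule.mem_sInf.1 hx N hN)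
  · exact Submodule.mem_sInf.2 fun N hN =>
      hN.1.2 n a (Submodule.mem_sInf.1 ha N hN) b (Submodule.mem_sInf.1 hb N hN)

lemma finiteType_iff_exists_adjoin_eq_top :
    C.FiniteType ↔ ∃ s : Finset L, C.adjoin (s : Set L) = ⊤ := by
  refine exists_congr fun s => ⟨fun h => ?_, fun h N hN hs => ?_⟩
  · exact h _ (C.isSubalgebra_adjoin s) (C.subset_adjoin s)
  · exact top_le_iff.1 (h ▸ adjoin_le hN hs)

variable {C} in
lemma IsSubalgebra.sup {P N : Submodule ℂ L} (hP : C.IsSubalgebra P) (hN : C.IsSubalgebra N)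
    (hPN : ∀ n, ∀ p ∈ P, ∀ q ∈ N, C.prd n p q ∈ P ⊔ N) : C.IsSubalgebra (P ⊔ N) := by
  have hD : ∀ x ∈ P ⊔ N, C.D x ∈ P ⊔ N := Module.End.invtSubmodule.sup_mem hP.1 hN.1
  refine ⟨hD, fun n a ha b hb => ?_⟩
  obtain ⟨p, hp, q, hq, rfl⟩ := Submodule.mem_sup.1 ha
  obtain ⟨p', hp', q', hq', rfl⟩ := Submodule.mem_sup.1 hb
  have hqp' : C.prd n q p' ∈ P ⊔ N :=
    C.prd_mem_of_forall_prd_swap_mem hD (fun m => hPN m p' hp' q hq) n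
  simp only [map_add, LinearMap.add_apply]
  exact add_mem
    (add_mem (Submodule.mem_sup_left (hP.2 n p hp p' hp')) hqp')
    (add_mem (hPN n p hp q' hq') (Submodule.mem_sup_right (hN.2 n q hq q' hq')))

/-- The elements of a Lie conformal algebra all of whose `n`-th products map `V` into `X`. For
`V = X` this is the stabilizer of `V` under the adjoint action. -/
def transporter (V X : Submodule ℂ L) : Submodule ℂ L where
  carrier := {a | ∀ n, ∀ b ∈ V, C.prd n a b ∈ X}
  zero_mem' n b _ := by simp only [map_zero, LinearMap.zero_apply, zero_mem]
  add_mem' ha ha' n b hb := by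
    simpa only [map_add, LinearMap.add_apply] using X.add_mem (ha n b hb) (ha' n b hb)
  smul_mem' c a ha n b hb := by
    simpa only [map_smul, LinearMap.smul_apply] using X.smul_mem c (ha n b hb)

lemma isSubalgebra_transporter {V X : Submodule ℂ L} (hXV : X ≤ V) :
    C.IsSubalgebra (C.transporter V X) := by
  refine ⟨fun a ha n b hb => ?_, fun m a ha a' ha' n b hb => ?_⟩
  · rw [C.sesq]
    exact X.smul_mem _ (ha _ b hb)
  · exact C.prd_prd_mem (fun k l => ha k _ (hXV (ha' l b hb)))
      (fun k l => ha' l _ (hXV (ha k b hb))) m n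

end Subalgebras

section Nakayama

lemma bspan_le {U V : Set L} {N : Submodule ℂ L} :
    C.bspan U V ≤ N ↔ ∀ n, ∀ u ∈ U, ∀ v ∈ V, C.prd n u v ∈ N := by
  refine Submodule.span_le.trans ⟨fun h n u hu v hv => h ⟨n, u, v, hu, hv, rfl⟩, ?_⟩
  rintro h _ ⟨n, u, v, hu, hv, rfl⟩
  exact h n u hu v hv

lemma prd_mem_bspan {U V : Set L} (n : ℕ) {u v : L} (hu : u ∈ U) (hv : v ∈ V) :
    C.prd n u v ∈ C.bspan U V :=
  C.bspan_le.1 le_rfl n u hu v hv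

lemma D_mem_bspan (U : Set L) {V : Set L} (hV : ∀ v ∈ V, C.D v ∈ V) :
    ∀ x ∈ C.bspan U V, C.D x ∈ C.bspan U V := by
  change C.bspan U V ≤ (C.bspan U V).comap C.D
  refine C.bspan_le.2 fun n u hu v hv => ?_
  rw [Submodule.mem_comap, ← sub_eq_of_eq_add (C.sesq' n u v)]
  exact sub_mem (C.prd_mem_bspan n hu (hV v hv))
    (Submodule.smul_mem _ _ (C.prd_mem_bspan _ hu hv))

/-- The lower series `M ⊇ [S λ M] ⊇ [S λ [S λ M]] ⊇ ⋯` of a submodule `M` under products with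
elements of `S`; the inclusions hold when `M` is stable under these products. -/
def lowerSeries (S : Set L) (M : Submodule ℂ L) : ℕ → Submodule ℂ L
  | 0 => M
  | n + 1 => C.bspan S (lowerSeries S M n)

lemma lowerSeries_le_span_iterPrd (S : Set L) (M : Submodule ℂ L) (n : ℕ) :
    C.lowerSeries S M n ≤ Submodule.span ℂ
      {y | ∃ l : List (L × ℕ), l.length = n ∧ (∀ q ∈ l, q.1 ∈ S) ∧ ∃ x ∈ M, C.iterPrd l x = y} := by
  induction n with
  | zero => exact fun x hx => Submodule.subset_span ⟨[], rfl, by simp, x, hx, rfl⟩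
  | succ n ih =>
    refine C.bspan_le.2 fun k u hu v hv => Submodule.mem_comap.1 (Submodule.span_le.2 ?_ (ih hv))
    rintro _ ⟨l, rfl, hl, x, hx, rfl⟩
    exact Submodule.subset_span ⟨(u, k) :: l, rfl, List.forall_mem_cons.2 ⟨hu, hl⟩, x, hx, rfl⟩

lemma le_sup_lowerSeries {S : Set L} {M N : Submodule ℂ L} (hN : C.bspan S N ≤ N)
    (hM : M ≤ N ⊔ C.bspan S M) (n : ℕ) : M ≤ N ⊔ C.lowerSeries S M n := by
  induction n with
  | zero => exact le_sup_right
  | succ n ih =>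
    refine hM.trans (sup_le le_sup_left (C.bspan_le.2 fun k u hu v hv => ?_))
    obtain ⟨y, hy, z, hz, rfl⟩ := Submodule.mem_sup.1 (ih hv)
    rw [map_add]
    exact Submodule.add_mem_sup (hN (C.prd_mem_bspan k hu hy)) (C.prd_mem_bspan k hu hz)

lemma le_of_le_sup_bspan {S : Set L} {M N : Submodule ℂ L} (hN : C.bspan S N ≤ N)
    (hM : M ≤ N ⊔ C.bspan S M) {n : ℕ}
    (hnil : ∀ l : List (L × ℕ), l.length = n → (∀ q ∈ l, q.1 ∈ S) → ∀ x ∈ M, C.iterPrd l x = 0) :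
    M ≤ N := by
  refine (C.le_sup_lowerSeries hN hM n).trans (sup_le le_rfl ?_)
  refine (C.lowerSeries_le_span_iterPrd S M n).trans (Submodule.span_le.2 ?_)
  rintro _ ⟨l, hl, hlS, x, hx, rfl⟩
  rw [hnil l hl hlS x hx]
  exact N.zero_mem

end Nakayama

end LieConformalAlgebra

namespace GradedLCA

open LieConformalAlgebra

variable {L : Type} [AddCommGroup L] [Module ℂ L] (C : GradedLCA L)

section Part

/-- The sum of the homogeneous components of a graded Lie conformal algebra with degrees in `s`. -/
def part (s : Set ℤ) : Submodule ℂ L := ⨆ i ∈ s, C.G i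

lemma G_le_part {s : Set ℤ} {i : ℤ} (hi : i ∈ s) : C.G i ≤ C.part s := le_biSup C.G hi

lemma part_mono {s t : Set ℤ} (hst : s ⊆ t) : C.part s ≤ C.part t := biSup_mono hst

lemma part_singleton (i : ℤ) : C.part {i} = C.G i := iSup_singleton

lemma part_union (s t : Set ℤ) : C.part (s ∪ t) = C.part s ⊔ C.part t := iSup_union

lemma part_univ : C.part Set.univ = ⊤ := by
  rw [part, iSup_univ, C.internal.submodule_iSup_eq_top]

lemma part_sup_part_compl (s : Set ℤ) : C.part s ⊔ C.part sᶜ = ⊤ := by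
  rw [← part_union, Set.union_compl_self, part_univ]

lemma disjoint_part {s t : Set ℤ} (hst : Disjoint s t) : Disjoint (C.part s) (C.part t) :=
  C.internal.submodule_iSupIndep.disjoint_biSup_biSup hst

variable {C} in
lemma eq_part_of_sup_part_compl_eq_top {s : Set ℤ} {N : Submodule ℂ L} (hN : N ≤ C.part s)
    (htop : N ⊔ C.part sᶜ = ⊤) : N = C.part s :=
  eq_of_le_of_inf_le_of_sup_le hN
    ((C.disjoint_part disjoint_compl_right).eq_bot.trans_le bot_le) (le_top.trans_eq htop.symm)

lemma D_mem_part (s : Set ℤ) : ∀ x ∈ C.part s, C.D x ∈ C.part s := by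
  change C.part s ≤ (C.part s).comap C.D
  exact iSup₂_le fun i hi x hx => C.G_le_part hi (C.dGrade i x hx)

lemma part_le_transporter {s t : Set ℤ} {X : Submodule ℂ L}
    (h : ∀ i ∈ s, ∀ j ∈ t, ∀ n, ∀ a ∈ C.G i, ∀ b ∈ C.G j, C.prd n a b ∈ X) :
    C.part s ≤ C.transporter (C.part t) X := by
  refine iSup₂_le fun i hi a ha n => ?_
  change C.part t ≤ X.comap (C.prd n a)
  exact iSup₂_le fun j hj b hb => h i hi j hj n a ha b hb

lemma prd_mem_part {s t u : Set ℤ} (h : ∀ i ∈ s, ∀ j ∈ t, i + j ∈ u) (n : ℕ) {a b : L}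
    (ha : a ∈ C.part s) (hb : b ∈ C.part t) : C.prd n a b ∈ C.part u :=
  C.part_le_transporter (fun i hi j hj n a ha b hb =>
    C.G_le_part (h i hi j hj) (C.prdGrade i j n a ha b hb)) ha n b hb

lemma isSubalgebra_part {s : Set ℤ} (hs : ∀ i ∈ s, ∀ j ∈ s, i + j ∈ s) :
    C.IsSubalgebra (C.part s) :=
  ⟨C.D_mem_part s, fun n _ ha _ hb => C.prd_mem_part hs n ha hb⟩

variable {C} in
lemma exists_finset_adjoin_part_eq_top (hfin : C.FiniteType) :
    ∃ t : Finset ℤ, C.adjoin (C.part t : Set L) = ⊤ := by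
  obtain ⟨s, hs⟩ := C.finiteType_iff_exists_adjoin_eq_top.1 hfin
  obtain ⟨t, ht⟩ := CompleteLattice.IsCompactElement.exists_finset_of_le_iSup (Submodule ℂ L)
    (Submodule.finset_span_isCompactElement s) C.G
    (le_top.trans_eq C.internal.submodule_iSup_eq_top.symm)
  refine ⟨t, top_le_iff.1 (hs.symm.trans_le ?_)⟩
  exact adjoin_le (C.isSubalgebra_adjoin _) fun x hx =>
    C.subset_adjoin _ (ht (Submodule.subset_span hx))

end Part

section NonnegativePart

lemma part_Iic_le_adjoin_part_Icc_sup (d : ℤ) :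
    C.part (Set.Iic d) ≤ C.adjoin (C.part (Set.Icc 0 d) : Set L) ⊔ C.part (Set.Iio 0) := by
  refine (C.part_mono (Set.Iic_subset_Iio_union_Icc (a := 0))).trans ?_
  rw [part_union, sup_comm]
  exact sup_le_sup_right (C.le_adjoin _) _

lemma isSubalgebra_adjoin_part_Icc_sup (d : ℤ) :
    C.IsSubalgebra (C.adjoin (C.part (Set.Icc 0 d) : Set L) ⊔ C.part (Set.Iio 0)) := by
  have hP := C.isSubalgebra_adjoin (C.part (Set.Icc 0 d) : Set L)
  have hPW : C.adjoin (C.part (Set.Icc 0 d) : Set L) ≤ C.transporter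
      (C.adjoin (C.part (Set.Icc 0 d) : Set L) ⊔ C.part (Set.Iio 0))
      (C.adjoin (C.part (Set.Icc 0 d) : Set L) ⊔ C.part (Set.Iio 0)) := by
    refine adjoin_le (C.isSubalgebra_transporter le_rfl) fun a ha n b hb => ?_
    obtain ⟨p, hp, q, hq, rfl⟩ := Submodule.mem_sup.1 hb
    have haq : C.prd n a q ∈ C.part (Set.Iic d) := 
      C.prd_mem_part (s := Set.Icc 0 d) (t := Set.Iio 0)
        (fun i hi j hj => Set.mem_Iic.2 (by linarith [hi.2, Set.mem_Iio.1 hj])) n ha hq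
    rw [map_add]
    exact add_mem (Submodule.mem_sup_left (hP.2 n a (C.subset_adjoin _ ha) p hp))
      (C.part_Iic_le_adjoin_part_Icc_sup d haq)
  exact hP.sup (C.isSubalgebra_part fun _ hi _ hj => Set.mem_Iio.2 (add_neg hi hj))
    fun n p hp q hq => hPW hp n q (Submodule.mem_sup_right hq)

variable {C} in
lemma adjoin_part_Icc_eq_part_Ici {d : ℤ} (hd : C.adjoin (C.part (Set.Iic d) : Set L) = ⊤) :
    C.adjoin (C.part (Set.Icc 0 d) : Set L) = C.part (Set.Ici 0) := by
  refine eq_part_of_sup_part_compl_eq_top ?_ ?_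
  · exact adjoin_le (C.isSubalgebra_part fun _ hi _ hj => add_nonneg (Set.mem_Ici.1 hi) hj)
      (C.part_mono Set.Icc_subset_Ici_self)
  · rw [Set.compl_Ici, ← top_le_iff, ← hd]
    exact adjoin_le (C.isSubalgebra_adjoin_part_Icc_sup d) (C.part_Iic_le_adjoin_part_Icc_sup d)

end NonnegativePart

section Descent

variable {C}

lemma Perfect.eq_top_of_forall_prd_mem (hperf : C.Perfect) {X : Submodule ℂ L}
    (hX : ∀ n a b, C.prd n a b ∈ X) : X = ⊤ := by
  rw [← top_le_iff, ← hperf]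
  refine Submodule.span_le.2 ?_
  rintro _ ⟨n, a, b, rfl⟩
  exact hX n a b

lemma Rootless.le_of_le_sup_bspan (hroot : C.Rootless) {i : ℤ} {N : Submodule ℂ L}
    (hN : C.bspan (C.G 0) N ≤ N) (h : C.G i ≤ N ⊔ C.bspan (C.G 0) (C.G i)) : C.G i ≤ N := by
  obtain ⟨n, -, hnil⟩ := hroot i
  exact C.toLieConformalAlgebra.le_of_le_sup_bspan hN h hnil

lemma part_Ici_le_transporter {d : ℤ} (hd : C.adjoin (C.part (Set.Iic d) : Set L) = ⊤)
    {R : Submodule ℂ L}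
    (h : ∀ i j, 0 ≤ i → 0 ≤ j → i + j = d → ∀ n, ∀ a ∈ C.G i, ∀ b ∈ C.G j, C.prd n a b ∈ R) :
    C.part (Set.Ici 0) ≤ C.transporter ⊤ (R ⊔ C.part {d}ᶜ) := by
  rw [← adjoin_part_Icc_eq_part_Ici hd]
  refine adjoin_le (C.isSubalgebra_transporter le_top) ?_
  rw [← C.part_univ]
  refine C.part_le_transporter fun i hi j _ n a ha b hb => ?_
  by_cases hij : i + j = d
  · exact Submodule.mem_sup_left (h i j hi.1 (by linarith [hi.2]) hij n a ha b hb)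
  · exact Submodule.mem_sup_right (C.G_le_part hij (C.prdGrade i j n a ha b hb))

lemma Perfect.sup_part_compl_eq_top (hperf : C.Perfect) {d : ℤ} (hd₀ : 0 ≤ d)
    (hd : C.adjoin (C.part (Set.Iic d) : Set L) = ⊤) {R : Submodule ℂ L}
    (hR : ∀ x ∈ R, C.D x ∈ R)
    (h : ∀ i j, 0 ≤ i → 0 ≤ j → i + j = d → ∀ n, ∀ a ∈ C.G i, ∀ b ∈ C.G j, C.prd n a b ∈ R) :
    R ⊔ C.part {d}ᶜ = ⊤ := by
  have hX : ∀ x ∈ R ⊔ C.part {d}ᶜ, C.D x ∈ R ⊔ C.part {d}ᶜ :=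
    Module.End.invtSubmodule.sup_mem hR (C.D_mem_part _)
  have hnonneg : C.part (Set.Ici 0) ≤ C.transporter ⊤ (R ⊔ C.part {d}ᶜ) :=
    part_Ici_le_transporter hd h
  have hneg : C.part (Set.Iio 0) ≤ C.transporter ⊤ (R ⊔ C.part {d}ᶜ) := by
    intro a ha n b _
    obtain ⟨p, hp, q, hq, rfl⟩ := Submodule.mem_sup.1
      ((C.part_sup_part_compl (Set.Ici 0)).ge (Submodule.mem_top (x := b)))
    rw [Set.compl_Ici] at hq
    have hap : C.prd n a p ∈ R ⊔ C.part {d}ᶜ :=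
      C.prd_mem_of_forall_prd_swap_mem hX (fun m => hnonneg hp m a Submodule.mem_top) n
    have haq : C.prd n a q ∈ C.part {d}ᶜ := C.prd_mem_part
      (fun i hi j hj => ((add_neg hi hj).trans_le hd₀).ne) n ha hq
    rw [map_add]
    exact add_mem hap (Submodule.mem_sup_right haq)
  have htop : ⊤ ≤ C.transporter ⊤ (R ⊔ C.part {d}ᶜ) := by
    rw [← Set.compl_Ici] at hneg
    exact (C.part_sup_part_compl _).ge.trans (sup_le hnonneg hneg)
  exact hperf.eq_top_of_forall_prd_mem fun n _ b => htop Submodule.mem_top n b Submodule.mem_top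

lemma Perfect.G_eq_of_forall_prd_mem (hperf : C.Perfect) {d : ℤ} (hd₀ : 0 ≤ d)
    (hd : C.adjoin (C.part (Set.Iic d) : Set L) = ⊤) {R : Submodule ℂ L}
    (hR : ∀ x ∈ R, C.D x ∈ R) (hRd : R ≤ C.G d)
    (h : ∀ i j, 0 ≤ i → 0 ≤ j → i + j = d → ∀ n, ∀ a ∈ C.G i, ∀ b ∈ C.G j, C.prd n a b ∈ R) :
    R = C.G d := by
  rw [← C.part_singleton] at hRd ⊢
  exact eq_part_of_sup_part_compl_eq_top hRd (hperf.sup_part_compl_eq_top hd₀ hd hR h)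

lemma prd_mem_inf_sup_bspan {d i j : ℤ} {N : Submodule ℂ L} (hN : C.IsSubalgebra N)
    (hle : C.part (Set.Ioo 0 d) ≤ N) (hi : 0 ≤ i) (hj : 0 ≤ j) (hij : i + j = d) (n : ℕ) {a b : L}
    (ha : a ∈ C.G i) (hb : b ∈ C.G j) :
    C.prd n a b ∈ N ⊓ C.G d ⊔ C.bspan (C.G 0) (C.G d) := by
  obtain rfl | hi := hi.eq_or_lt
  · obtain rfl : j = d := by linarith
    exact Submodule.mem_sup_right (C.prd_mem_bspan n ha hb)
  obtain rfl | hj := hj.eq_or_lt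
  · obtain rfl : i = d := by linarith
    exact Submodule.mem_sup_right <| C.prd_mem_of_forall_prd_swap_mem
      (C.D_mem_bspan _ (C.dGrade i)) (fun m => C.prd_mem_bspan m hb ha) n
  have haN : a ∈ N := hle (C.G_le_part (Set.mem_Ioo.2 ⟨hi, by linarith⟩) ha)
  have hbN : b ∈ N := hle (C.G_le_part (Set.mem_Ioo.2 ⟨hj, by linarith⟩) hb)
  exact Submodule.mem_sup_left ⟨hN.2 n a haN b hbN, hij ▸ C.prdGrade i j n a ha b hb⟩

lemma bspan_G_zero_le (i : ℤ) : C.bspan (C.G 0) (C.G i) ≤ C.G i :=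
  C.bspan_le.2 fun n a ha b hb => by simpa only [zero_add] using C.prdGrade 0 i n a ha b hb

lemma Perfect.G_le_of_part_Ico_le (hperf : C.Perfect) (hroot : C.Rootless) {d : ℤ} (hd₀ : 0 < d)
    (hd : C.adjoin (C.part (Set.Iic d) : Set L) = ⊤) {N : Submodule ℂ L} (hN : C.IsSubalgebra N)
    (hle : C.part (Set.Ico 0 d) ≤ N) : C.G d ≤ N := by
  have hG₀ : C.G 0 ≤ N := (C.G_le_part (Set.left_mem_Ico.2 hd₀)).trans hle
  have hIoo : C.part (Set.Ioo 0 d) ≤ N := (C.part_mono Set.Ioo_subset_Ico_self).trans hle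
  have hR : N ⊓ C.G d ⊔ C.bspan (C.G 0) (C.G d) = C.G d :=
    hperf.G_eq_of_forall_prd_mem hd₀.le hd
      (Module.End.invtSubmodule.sup_mem
        (Module.End.invtSubmodule.inf_mem hN.1 (C.dGrade d)) (C.D_mem_bspan _ (C.dGrade d)))
      (sup_le inf_le_right (bspan_G_zero_le d))
      fun i j hi hj hij n a ha b hb => prd_mem_inf_sup_bspan hN hIoo hi hj hij n ha hb
  exact hroot.le_of_le_sup_bspan (C.bspan_le.2 fun n a ha b hb => hN.2 n a (hG₀ ha) b hb)
    (hR.ge.trans (sup_le_sup_right inf_le_left _))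

lemma Perfect.adjoin_part_Iio_eq_top (hperf : C.Perfect) (hroot : C.Rootless) {d : ℤ}
    (hd₀ : 0 < d) (hd : C.adjoin (C.part (Set.Iic d) : Set L) = ⊤) :
    C.adjoin (C.part (Set.Iio d) : Set L) = ⊤ := by
  have hN := C.isSubalgebra_adjoin (C.part (Set.Iio d) : Set L)
  have hG : C.G d ≤ C.adjoin (C.part (Set.Iio d) : Set L) :=
    hperf.G_le_of_part_Ico_le hroot hd₀ hd hN
      ((C.part_mono Set.Ico_subset_Iio_self).trans (C.le_adjoin _))
  rw [← top_le_iff, ← hd]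
  refine adjoin_le hN ?_
  rw [SetLike.coe_subset_coe, ← Set.Iio_union_right, part_union, part_singleton]
  exact sup_le (C.le_adjoin _) hG

lemma Perfect.part_Iic_zero_eq_top (hperf : C.Perfect) (hroot : C.Rootless) {t : Set ℤ}
    (ht : BddAbove t) (htop : C.adjoin (C.part t : Set L) = ⊤) : C.part (Set.Iic 0) = ⊤ := by
  have descent (d : ℕ) (hd : C.adjoin (C.part (Set.Iic d) : Set L) = ⊤) :
      C.part (Set.Iic 0) = ⊤ := by
    induction d with
    | zero =>
      rw [← top_le_iff, ← hd]
      exact adjoin_le (C.isSubalgebra_part fun _ hi _ hj => add_nonpos (Set.mem_Iic.1 hi) hj) le_rfl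
    | succ d ih =>
      refine ih ?_
      have h := hperf.adjoin_part_Iio_eq_top hroot (Int.natCast_pos.2 d.succ_pos) hd
      rwa [Nat.cast_succ, Set.Iio_add_one_eq_Iic] at h
  obtain ⟨d, hd⟩ := ht
  refine descent d.toNat ?_
  rw [← top_le_iff, ← htop]
  refine adjoin_le (C.isSubalgebra_adjoin _) fun x hx => C.subset_adjoin _ (C.part_mono ?_ hx)
  exact fun i hi => (hd hi).trans d.self_le_toNat

end Descent

section NegatedGrading

/-- The same Lie conformal algebra with the component of degree `i` placed in degree `-i`. -/
def negGrading : GradedLCA L where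
  toLieConformalAlgebra := C.toLieConformalAlgebra
  G i := C.G (-i)
  internal := by
    rw [DirectSum.isInternal_submodule_iff_iSupIndep_and_iSup_eq_top]
    exact ⟨C.internal.submodule_iSupIndep.comp neg_injective,
      ((Equiv.neg ℤ).iSup_comp (g := C.G)).trans C.internal.submodule_iSup_eq_top⟩
  dGrade i := C.dGrade (-i)
  prdGrade i j n a ha b hb := by
    rw [neg_add]
    exact C.prdGrade (-i) (-j) n a ha b hb

open scoped Pointwise in
lemma part_negGrading (s : Set ℤ) : C.negGrading.part s = C.part (-s) := by
  refine le_antisymm (iSup₂_le fun i hi => C.G_le_part (Set.neg_mem_neg.2 hi)) ?_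
  refine iSup₂_le fun i hi => ?_
  simpa only [negGrading, neg_neg] using C.negGrading.G_le_part (Set.mem_neg.1 hi)

variable {C}

lemma Rootless.negGrading (hroot : C.Rootless) : C.negGrading.Rootless := fun i => by
  simpa only [GradedLCA.negGrading, neg_zero] using hroot (-i)

lemma Perfect.part_Ici_zero_eq_top (hperf : C.Perfect) (hroot : C.Rootless) {t : Set ℤ}
    (ht : BddBelow t) (htop : C.adjoin (C.part t : Set L) = ⊤) : C.part (Set.Ici 0) = ⊤ := by
  have h : C.negGrading.part (Set.Iic 0) = ⊤ :=
    Perfect.part_Iic_zero_eq_top (C := C.negGrading) hperf hroot.negGrading ht.neg <| by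
      rwa [part_negGrading, neg_neg]
  rwa [part_negGrading, Set.neg_Iic, neg_zero] at h

end NegatedGrading

variable {C}

lemma G_zero_eq_top (hnonpos : C.part (Set.Iic 0) = ⊤) (hnonneg : C.part (Set.Ici 0) = ⊤) :
    C.G 0 = ⊤ := by
  have hneg : C.part (Set.Iio 0) = ⊥ := by
    simpa only [hnonneg, disjoint_top] using
      C.disjoint_part (Set.Iio_disjoint_Ici (le_refl (0 : ℤ)))
  rwa [← Set.Iio_union_right, part_union, hneg, bot_sup_eq, part_singleton] at hnonpos

lemma Perfect.G_zero_ne_top [Nontrivial L] (hperf : C.Perfect) (hroot : C.Rootless) :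
    C.G 0 ≠ ⊤ := by
  intro htop
  have hperf₀ : C.bspan (C.G 0) (C.G 0) = ⊤ := hperf.eq_top_of_forall_prd_mem fun n a b =>
    C.prd_mem_bspan n (htop.ge Submodule.mem_top) (htop.ge Submodule.mem_top)
  have hbot : C.G 0 ≤ ⊥ := hroot.le_of_le_sup_bspan
    (C.bspan_le.2 fun n a _ b hb => by simp [(Submodule.mem_bot ℂ).1 hb])
    (by rw [hperf₀, bot_sup_eq]; exact le_top)
  exact bot_ne_top (le_bot_iff.1 hbot ▸ htop)

end GradedLCA

theorem perfect_rootless_not_finite_type_general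
    {L : Type} [AddCommGroup L] [Module ℂ L] [Nontrivial L] (C : GradedLCA L)
    (hperf : C.Perfect) (hroot : C.Rootless)
    {t : Set ℤ} (hbelow : BddBelow t) (habove : BddAbove t) :
    C.adjoin (C.part t : Set L) ≠ ⊤ := fun htop =>
  hperf.G_zero_ne_top hroot <| GradedLCA.G_zero_eq_top
    (hperf.part_Iic_zero_eq_top hroot habove htop)
    (hperf.part_Ici_zero_eq_top hroot hbelow htop)

/-- a nonzero perfect rootless `ℤ`-graded Lie conformal algebra
is not of finite type. -/
theorem perfect_rootless_not_finite_type
    {L : Type} [AddCommGroup L] [Module ℂ L] (C : GradedLCA L)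
    (hnz : Nontrivial L) (hperf : C.Perfect) (hroot : C.Rootless) :
    ¬ C.toLieConformalAlgebra.FiniteType := fun hfin =>
  let ⟨t, ht⟩ := GradedLCA.exists_finset_adjoin_part_eq_top hfin
  perfect_rootless_not_finite_type_general C hperf hroot t.bddBelow t.bddAbove ht
end
end

section
/- Let L = ⊕_{i∈ℤ} L_i be a rootless ℤ-graded Lie conformal algebra that is finitely generated as a ℂ[∂]-module, and let M be a graded L-module that is finitely generated as a ℂ[∂]-module and weightless. Then M is a nilpotent L-module. -/
open scoped BigOperators Classical ENNReal
open Polynomial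

noncomputable section

/-!
Let a space `H ≤ L` act on a module through the span `opSpan H` of the operators `a_(n)`, `a ∈ H`.
If `H` and `K` act nilpotently and `[H_λ K] ⊆ H[λ]`, the commutator formula gives
`opSpan H * opSpan K ≤ opSpan K * opSpan H + opSpan H`, so in a long product of operators the
factors from `H` can be moved to the right without decreasing their number, and `H + K` acts
nilpotently. Since only finitely many degrees occur, any `K ≤ L_i` with `i ≠ 0` acts nilpotently,
and by the rootless and weightless hypotheses so does `L₀`, both on `L` and on `M`. As `L` is
Noetherian over `ℂ[∂]`, choose a maximal `∂`-invariant homogeneous `H ≥ L₀` acting nilpotently on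
`L` and on `M`. If `H ≠ L`, then, as in Engel's theorem, nilpotency on `L` yields a homogeneous
`a ∉ H` with `[H_λ a] ⊆ H[λ]`; its degree is nonzero because `L₀ ≤ H`, and adjoining the elements
of that kind in that degree contradicts maximality.
-/

section OrderedMonoid

variable {α : Type*} [Monoid α] [Preorder α] [MulLeftMono α] [MulRightMono α] {a b : α}

theorem pow_mul_le_mul_pow_of_mul_le_mul (h : a * b ≤ b * a) (n : ℕ) : a ^ n * b ≤ b * a ^ n := by
  induction n with
  | zero => simp
  | succ n ih =>
    calc a ^ (n + 1) * b = a ^ n * (a * b) := by rw [pow_succ, mul_assoc]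
      _ ≤ a ^ n * (b * a) := by gcongr
      _ = a ^ n * b * a := (mul_assoc ..).symm
      _ ≤ b * a ^ n * a := by gcongr
      _ = b * a ^ (n + 1) := by rw [pow_succ, mul_assoc]

theorem mul_pow_le_pow_mul_of_mul_le_mul (h : a * b ≤ b * a) (n : ℕ) : a * b ^ n ≤ b ^ n * a := by
  induction n with
  | zero => simp
  | succ n ih =>
    calc a * b ^ (n + 1) = a * b ^ n * b := by rw [pow_succ, mul_assoc]
      _ ≤ b ^ n * a * b := by gcongr
      _ = b ^ n * (a * b) := mul_assoc ..
      _ ≤ b ^ n * (b * a) := by gcongr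
      _ = b ^ (n + 1) * a := by rw [pow_succ, mul_assoc]

theorem mul_pow_le_of_mul_le_mul (h : a * b ≤ b * a) (n : ℕ) : (b * a) ^ n ≤ b ^ n * a ^ n := by
  induction n with
  | zero => simp
  | succ n ih =>
    calc (b * a) ^ (n + 1) = (b * a) ^ n * (b * a) := pow_succ ..
      _ ≤ b ^ n * a ^ n * (b * a) := by gcongr
      _ = b ^ n * (a ^ n * b) * a := by simp only [mul_assoc]
      _ ≤ b ^ n * (b * a ^ n) * a :=
        mul_le_mul_left (mul_le_mul_right (pow_mul_le_mul_pow_of_mul_le_mul h n) _) _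
      _ = b ^ (n + 1) * a ^ (n + 1) := by simp only [pow_succ, mul_assoc]

end OrderedMonoid

section IdemSemiring

variable {α : Type*} [IdemSemiring α] {u v : α}

theorem mul_one_add_add_le (h : u * v ≤ v * u + u) :
    u * (1 + (u + v)) ≤ (1 + (u + v)) * u := by
  have huu : u * (u + v) ≤ u + (u + v) * u :=
    calc u * (u + v) ≤ u * u + (v * u + u) := by rw [mul_add]; gcongr
      _ = u + (u + v) * u := by rw [add_mul, ← add_assoc, add_comm]
  calc u * (1 + (u + v)) = u + u * (u + v) := by rw [mul_add, mul_one]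
    _ ≤ u + (u + (u + v) * u) := by gcongr
    _ = (1 + (u + v)) * u := by rw [← add_assoc, add_idem, add_mul 1, one_mul]

-- `(1 + (u + v)) ^ n` collects the words in `u` and `v` of length at most `n`; a word containing
-- `u` is bounded by words of at most its length that end in `u`.
theorem add_pow_le_pow_add_mul (h : u * v ≤ v * u + u) (n : ℕ) :
    (u + v) ^ n ≤ v ^ n + (1 + (u + v)) ^ n * u := by
  set x := 1 + (u + v)
  have hx : 1 ≤ x := le_self_add
  have huvx : u + v ≤ x := le_add_self
  have hvx : v ≤ x := le_add_self.trans huvx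
  have hux : u * x ≤ x * u := mul_one_add_add_le h
  induction n with
  | zero => simp [add_eq_sup]
  | succ n ih =>
    have hu : u * v ^ n ≤ x ^ (n + 1) * u :=
      calc u * v ^ n ≤ u * x ^ n := by gcongr
        _ ≤ x ^ n * u := mul_pow_le_pow_mul_of_mul_le_mul hux n
        _ ≤ x ^ (n + 1) * u := by gcongr; exact n.le_succ
    calc (u + v) ^ (n + 1) = (u + v) * (u + v) ^ n := pow_succ' ..
      _ ≤ (u + v) * (v ^ n + x ^ n * u) := by gcongr
      _ = u * v ^ n + v ^ (n + 1) + (u + v) * (x ^ n * u) := by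
        rw [mul_add, add_mul, pow_succ' v]
      _ ≤ x ^ (n + 1) * u + v ^ (n + 1) + x * (x ^ n * u) := by gcongr
      _ = v ^ (n + 1) + x ^ (n + 1) * u := by
        rw [← mul_assoc, ← pow_succ', add_right_comm, add_idem, add_comm]

theorem isNilpotent_add_of_mul_le (hu : IsNilpotent u) (hv : IsNilpotent v)
    (h : u * v ≤ v * u + u) : IsNilpotent (u + v) := by
  obtain ⟨N, hN⟩ := hu
  obtain ⟨K, hK⟩ := hv
  set x := 1 + (u + v)
  have hux : u * x ^ K ≤ x ^ K * u := mul_pow_le_pow_mul_of_mul_le_mul (mul_one_add_add_le h) K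
  have hK' : (u + v) ^ K ≤ x ^ K * u := by simpa [hK] using add_pow_le_pow_add_mul h K
  refine ⟨K * N, le_antisymm ?_ (by simp)⟩
  calc (u + v) ^ (K * N) = ((u + v) ^ K) ^ N := pow_mul ..
    _ ≤ (x ^ K * u) ^ N := by gcongr
    _ ≤ (x ^ K) ^ N * u ^ N := mul_pow_le_of_mul_le_mul hux N
    _ = 0 := by rw [hN, mul_zero]

end IdemSemiring

section InvariantSubmodules

variable {R V : Type*} [CommRing R] [AddCommGroup V] [Module R V] {D : Module.End R V}

theorem finite_aeval'_of_invtSubmodule_eq_top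
    (h : ∃ s : Finset V, ∀ N ∈ D.invtSubmodule, (s : Set V) ⊆ N → N = ⊤) :
    Module.Finite R[X] (Module.AEval' D) := by
  obtain ⟨s, hs⟩ := h
  let e := Module.AEval'.of D
  let T : Submodule R[X] (Module.AEval' D) := Submodule.span R[X] (e '' s)
  let N := (Module.AEval.mapSubmodule R V D).symm T
  have hmem (x : V) : x ∈ (N : Submodule R V) ↔ e x ∈ T := Iff.rfl
  have hN : (N : Submodule R V) = ⊤ := hs N N.2 fun x hx =>
    (hmem x).2 (Submodule.subset_span (Set.mem_image_of_mem e hx))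
  have hT : T = ⊤ := by
    refine eq_top_iff.2 fun y _ => ?_
    have hy : e.symm y ∈ (N : Submodule R V) := hN ▸ Submodule.mem_top
    rwa [hmem, e.apply_symm_apply] at hy
  exact Module.finite_def.2 (hT ▸ Submodule.fg_span (s.finite_toSet.image e))

theorem wellFoundedGT_invtSubmodule [IsNoetherianRing R]
    (h : ∃ s : Finset V, ∀ N ∈ D.invtSubmodule, (s : Set V) ⊆ N → N = ⊤) :
    WellFoundedGT D.invtSubmodule := by
  have := finite_aeval'_of_invtSubmodule_eq_top h
  exact (Module.AEval.mapSubmodule R V D).toOrderEmbedding.wellFoundedGT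

theorem finite_setOf_ne_bot_of_invtSubmodule_eq_top {ι : Type*} [DecidableEq ι]
    {G : ι → Submodule R V} (hG : DirectSum.IsInternal G) (hD : ∀ i, G i ∈ D.invtSubmodule)
    (h : ∃ s : Finset V, ∀ N ∈ D.invtSubmodule, (s : Set V) ⊆ N → N = ⊤) :
    {i | G i ≠ ⊥}.Finite := by
  obtain ⟨s, hs⟩ := h
  have hmem (x : V) : ∃ T : Finset ι, x ∈ ⨆ i ∈ T, G i := by
    rw [← Submodule.mem_iSup_iff_exists_finset, hG.submodule_iSup_eq_top]
    exact Submodule.mem_top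
  choose T hT using hmem
  let U := s.biUnion T
  have hU : ⨆ i ∈ U, G i = ⊤ := by
    refine hs _ (iSup₂_le fun i hi => (hD i).trans (Submodule.comap_mono ?_)) fun x hx => ?_
    · exact le_iSup₂_of_le i hi le_rfl
    · have hle : ⨆ i ∈ T x, G i ≤ ⨆ i ∈ U, G i :=
        biSup_mono fun i hi => Finset.mem_biUnion.2 ⟨x, hx, hi⟩
      exact hle (hT x)
  refine U.finite_toSet.subset fun i hi => ?_
  by_contra hiU
  have hdisj : Disjoint (G i) (⨆ j ∈ U, G j) := hG.submodule_iSupIndep.disjoint_biSup hiU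
  exact hi (disjoint_top.1 (hU ▸ hdisj))

end InvariantSubmodules

namespace LieConformalAlgebra

variable {L : Type} [AddCommGroup L] [Module ℂ L] (C : LieConformalAlgebra L)

/-- The normalizer of `H` in `L`: the space of all `a` with `[H_λ a] ⊆ H[λ]`. The subspace `H` need
not be a subalgebra. -/
def normalizer (H : Submodule ℂ L) : Submodule ℂ L :=
  ⨅ (n : ℕ) (s : H), H.comap (C.prd n s)

variable {C} {H : Submodule ℂ L}

theorem mem_normalizer {a : L} : a ∈ C.normalizer H ↔ ∀ n, ∀ s ∈ H, C.prd n s a ∈ H := by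
  simp [normalizer, Submodule.mem_iInf]

theorem normalizer_mem_invtSubmodule (hH : H ∈ Module.End.invtSubmodule C.D) :
    C.normalizer H ∈ Module.End.invtSubmodule C.D := by
  intro a ha
  rw [mem_normalizer] at ha
  refine mem_normalizer.2 fun n s hs => ?_
  rw [C.sesq']
  exact H.add_mem (hH (ha n s hs)) (H.smul_mem _ (ha (n - 1) s hs))

end LieConformalAlgebra

namespace LCAModule

variable {L : Type} [AddCommGroup L] [Module ℂ L] {C : LieConformalAlgebra L}
variable {M : Type} [AddCommGroup M] [Module ℂ M] (ρ : LCAModule C M)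

theorem iterAct_eq_prod (l : List (L × ℕ)) (m : M) :
    ρ.iterAct l m = (l.map fun q => ρ.act q.2 q.1).prod m := by
  induction l with
  | nil => rfl
  | cons q t ih => simp [iterAct, ih]

theorem iterAct_zero (l : List (L × ℕ)) : ρ.iterAct l 0 = 0 := by
  rw [iterAct_eq_prod, map_zero]

theorem iterAct_append (l₁ l₂ : List (L × ℕ)) (m : M) :
    ρ.iterAct (l₁ ++ l₂) m = ρ.iterAct l₁ (ρ.iterAct l₂ m) := by
  simp [iterAct_eq_prod]

/-- The span of the operators `a_(n)` on `M` with `a ∈ H`. Its powers in the semiring of subspaces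
of `End M` are spanned by the iterated actions of `H`, so `IsNilpotent (ρ.opSpan H)` expresses that
`H` acts nilpotently on `M`. -/
def opSpan (H : Submodule ℂ L) : Submodule ℂ (Module.End ℂ M) :=
  ⨆ n : ℕ, H.map (ρ.act n)

variable {ρ} {H K : Submodule ℂ L}

theorem act_mem_opSpan {a : L} (ha : a ∈ H) (n : ℕ) : ρ.act n a ∈ ρ.opSpan H :=
  Submodule.mem_iSup_of_mem n (Submodule.mem_map_of_mem ha)

theorem opSpan_eq_span : ρ.opSpan H = Submodule.span ℂ (⋃ n : ℕ, ρ.act n '' H) := by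
  simp only [opSpan, Submodule.span_iUnion, Submodule.span_image, Submodule.span_eq]

theorem opSpan_sup : ρ.opSpan (H ⊔ K) = ρ.opSpan H ⊔ ρ.opSpan K := by
  simp only [opSpan, Submodule.map_sup, iSup_sup_eq]

theorem prod_map_act_mem_opSpan_pow {l : List (L × ℕ)} (hl : ∀ q ∈ l, q.1 ∈ H) :
    (l.map fun q => ρ.act q.2 q.1).prod ∈ ρ.opSpan H ^ l.length := by
  induction l with
  | nil => exact Submodule.one_le.1 le_rfl
  | cons q t ih =>
    rw [List.forall_mem_cons] at hl
    have hmul := Submodule.mul_mem_mul (act_mem_opSpan (ρ := ρ) hl.1 q.2) (ih hl.2)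
    exact pow_succ' (ρ.opSpan H) t.length ▸ hmul

open scoped Pointwise in
theorem forall_mem_opSpan_pow_apply_eq_zero_iff {n : ℕ} {m : M} :
    (∀ f ∈ ρ.opSpan H ^ n, f m = 0) ↔
      ∀ l : List (L × ℕ), l.length = n → (∀ q ∈ l, q.1 ∈ H) → ρ.iterAct l m = 0 := by
  constructor
  · rintro h l rfl hl
    rw [iterAct_eq_prod]
    exact h _ (prod_map_act_mem_opSpan_pow hl)
  · intro h
    suffices ρ.opSpan H ^ n ≤ LinearMap.ker (LinearMap.applyₗ m) from this
    rw [opSpan_eq_span, Submodule.span_pow, Submodule.span_le]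
    intro f hf
    obtain ⟨g, rfl⟩ := Set.mem_pow.1 hf
    have hg (i : Fin n) : ∃ q : L × ℕ, q.1 ∈ H ∧ ρ.act q.2 q.1 = g i := by
      obtain ⟨k, a, ha, hk⟩ := Set.mem_iUnion.1 (g i).2
      exact ⟨(a, k), ha, hk⟩
    choose q hqH hq using hg
    have hl := h (List.ofFn q) List.length_ofFn (by simpa [List.forall_mem_ofFn_iff] using hqH)
    simpa [iterAct_eq_prod, List.map_ofFn, Function.comp_def, hq] using hl

theorem opSpan_mul_le (hK : K ≤ C.normalizer H) :
    ρ.opSpan H * ρ.opSpan K ≤ ρ.opSpan K * ρ.opSpan H + ρ.opSpan H := by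
  nth_rw 1 [opSpan_eq_span, opSpan_eq_span, Submodule.span_mul_span]
  rw [Submodule.span_le]
  simp only [Set.mul_subset_iff, Set.mem_iUnion]
  rintro _ ⟨p, s, hs, rfl⟩ _ ⟨q, b, hb, rfl⟩
  have hcomm : ρ.act p s * ρ.act q b = ρ.act q b * ρ.act p s +
      ∑ j ∈ Finset.range (p + 1), (p.choose j : ℂ) • ρ.act (p + q - j) (C.prd j s b) := by
    ext m
    simpa [LinearMap.sum_apply, sub_eq_iff_eq_add'] using ρ.comm p q s b m
  rw [hcomm]
  refine Submodule.add_mem_sup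
    (Submodule.mul_mem_mul (act_mem_opSpan hb q) (act_mem_opSpan hs p)) ?_
  exact Submodule.sum_mem _ fun j _ => Submodule.smul_mem _ _
    (act_mem_opSpan (LieConformalAlgebra.mem_normalizer.1 (hK hb) j s hs) _)

theorem isNilpotent_opSpan_sup (hK : K ≤ C.normalizer H) (hHn : IsNilpotent (ρ.opSpan H))
    (hKn : IsNilpotent (ρ.opSpan K)) : IsNilpotent (ρ.opSpan (H ⊔ K)) := by
  rw [opSpan_sup]
  exact isNilpotent_add_of_mul_le (α := Submodule ℂ (Module.End ℂ M))
    hHn hKn (opSpan_mul_le hK)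

theorem nilpotent_of_isNilpotent_opSpan_top (h : IsNilpotent (ρ.opSpan ⊤)) : ρ.Nilpotent := by
  obtain ⟨n, hn⟩ := h
  have hn' : ρ.opSpan ⊤ ^ (n + 1) = 0 :=
    pow_eq_zero_of_le (M₀ := Submodule ℂ (Module.End ℂ M)) n.le_succ hn
  refine ⟨n + 1, n.succ_pos, fun l hl m => ?_⟩
  refine forall_mem_opSpan_pow_apply_eq_zero_iff.1 (fun f hf => ?_) l hl
    fun _ _ => Submodule.mem_top
  rw [hn', Submodule.zero_eq_bot, Submodule.mem_bot] at hf
  rw [hf, LinearMap.zero_apply]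

end LCAModule

namespace GradedLCAModule

variable {L : Type} [AddCommGroup L] [Module ℂ L] {C : GradedLCA L}
variable {M : Type} [AddCommGroup M] [Module ℂ M] {ρ : GradedLCAModule C M}

theorem iterAct_mem_GM {i j : ℤ} {m : M} (hm : m ∈ ρ.GM j) {l : List (L × ℕ)}
    (hl : ∀ q ∈ l, q.1 ∈ C.G i) : ρ.iterAct l m ∈ ρ.GM (l.length * i + j) := by
  induction l with
  | nil => simpa [LCAModule.iterAct] using hm
  | cons q t ih =>
    have hmem := ρ.actGrade i _ q.2 q.1 (hl q (by simp)) _ (ih fun r hr => hl r (by simp [hr]))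
    have hdeg : ((q :: t).length : ℤ) * i + j = i + (t.length * i + j) := by
      push_cast [List.length_cons]
      ring
    rwa [hdeg]

theorem isNilpotent_opSpan_of_iterAct_eq_zero {H : Submodule ℂ L} (n : ℕ)
    (h : ∀ j, ∀ m ∈ ρ.GM j, ∀ l : List (L × ℕ), l.length = n → (∀ q ∈ l, q.1 ∈ H) →
      ρ.iterAct l m = 0) : IsNilpotent (ρ.opSpan H) := by
  refine ⟨n, (Submodule.eq_bot_iff _).2 fun f hf => LinearMap.ker_eq_top.1 ?_⟩
  rw [eq_top_iff, ← ρ.internal.submodule_iSup_eq_top]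
  exact iSup_le fun j m hm =>
    LCAModule.forall_mem_opSpan_pow_apply_eq_zero_iff.2 (h j m hm) f hf

open scoped Pointwise in
theorem isNilpotent_opSpan_of_le_G (hfin : {j | ρ.GM j ≠ ⊥}.Finite) {i : ℤ} (hi : i ≠ 0)
    {K : Submodule ℂ L} (hK : K ≤ C.G i) : IsNilpotent (ρ.opSpan K) := by
  obtain ⟨_, ⟨n, rfl⟩, hn⟩ : ∃ k ∈ Set.range fun n : ℕ => (n : ℤ) * i,
      k ∉ {j | ρ.GM j ≠ ⊥} - {j | ρ.GM j ≠ ⊥} :=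
    (Set.infinite_range_of_injective
      ((mul_left_injective₀ hi).comp Nat.cast_injective)).exists_notMem_finite (hfin.sub hfin)
  refine isNilpotent_opSpan_of_iterAct_eq_zero n fun j m hm l hl hlK => ?_
  have hmem : ρ.iterAct l m ∈ ρ.GM (n * i + j) :=
    hl ▸ iterAct_mem_GM hm fun q hq => hK (hlK q hq)
  by_contra hne
  refine hn ⟨n * i + j, fun hbot => hne ?_, j, fun hbot => hne ?_, add_sub_cancel_right _ _⟩
  · simpa [hbot] using hmem
  · rw [hbot, Submodule.mem_bot] at hm
    rw [hm, LCAModule.iterAct_zero]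

theorem Weightless.isNilpotent_opSpan_G_zero (hwl : ρ.Weightless)
    (hfin : {j | ρ.GM j ≠ ⊥}.Finite) : IsNilpotent (ρ.opSpan (C.G 0)) := by
  choose n _ hn using hwl
  refine isNilpotent_opSpan_of_iterAct_eq_zero (hfin.toFinset.sup n) fun j m hm l hl hl₀ => ?_
  by_cases hj : ρ.GM j = ⊥
  · rw [hj, Submodule.mem_bot] at hm
    rw [hm, LCAModule.iterAct_zero]
  · have hjn : n j ≤ l.length := hl ▸ Finset.le_sup (hfin.mem_toFinset.2 hj)
    rw [← List.take_append_drop (l.length - n j) l, LCAModule.iterAct_append,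
      hn j _ (by rw [List.length_drop]; omega) (fun q hq => hl₀ q (List.mem_of_mem_drop hq)) m hm,
      LCAModule.iterAct_zero]

theorem finite_setOf_GM_ne_bot (hfg : ρ.FGPoly) : {j | ρ.GM j ≠ ⊥}.Finite :=
  finite_setOf_ne_bot_of_invtSubmodule_eq_top ρ.internal ρ.dGrade hfg

end GradedLCAModule

namespace GradedLCA

variable {L : Type} [AddCommGroup L] [Module ℂ L] (C : GradedLCA L)

/-- The adjoint module: `L` as a graded module over itself. -/
def adjoint : GradedLCAModule C L where
  DM := C.D
  act := C.prd
  bound := C.bound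
  sesq := C.sesq
  sesq' := C.sesq'
  comm := C.jacobi
  GM := C.G
  internal := C.internal
  dGrade := C.dGrade
  actGrade := C.prdGrade

theorem adjoint_iterAct (l : List (L × ℕ)) (x : L) : C.adjoint.iterAct l x = C.iterPrd l x := by
  induction l with
  | nil => rfl
  | cons q t ih => exact congrArg (C.prd q.2 q.1) ih

variable {C}

theorem Rootless.adjoint_weightless (hroot : C.Rootless) : C.adjoint.Weightless := by
  intro i
  obtain ⟨n, hn, h⟩ := hroot i
  exact ⟨n, hn, fun l hl hl₀ x hx => (C.adjoint_iterAct l x).trans (h l hl hl₀ x hx)⟩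

theorem mem_of_forall_opSpan_pow_apply_mem {H : Submodule ℂ L} (hH : H ≤ ⨆ i, H ⊓ C.G i)
    (hnorm : ∀ i, C.normalizer H ⊓ C.G i ≤ H) (n : ℕ) {i : ℤ} {x : L} (hx : x ∈ C.G i)
    (h : ∀ f ∈ C.adjoint.opSpan H ^ n, f x ∈ H) : x ∈ H := by
  induction n generalizing i x with
  | zero => exact h 1 (pow_zero (C.adjoint.opSpan H) ▸ Submodule.one_le.1 le_rfl)
  | succ n ih =>
    refine hnorm i ⟨LieConformalAlgebra.mem_normalizer.2 fun k s hs => ?_, hx⟩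
    suffices ⨆ j, H ⊓ C.G j ≤ H.comap ((C.prd k).flip x) from this (hH hs)
    refine iSup_le fun j t ⟨htH, htj⟩ => ih (C.prdGrade j i k t htj x hx) fun f hf => ?_
    have htk : C.prd k t ∈ C.adjoint.opSpan H := LCAModule.act_mem_opSpan htH k
    have hmul := Submodule.mul_mem_mul hf htk
    exact h (f * C.prd k t) (pow_succ (C.adjoint.opSpan H) n ▸ hmul)

theorem eq_top_of_normalizer_inf_le {H : Submodule ℂ L} (hH : H ≤ ⨆ i, H ⊓ C.G i)
    (hnil : IsNilpotent (C.adjoint.opSpan H)) (hnorm : ∀ i, C.normalizer H ⊓ C.G i ≤ H) :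
    H = ⊤ := by
  obtain ⟨n, hn⟩ := hnil
  rw [eq_top_iff, ← C.internal.submodule_iSup_eq_top]
  refine iSup_le fun i x hx => mem_of_forall_opSpan_pow_apply_mem hH hnorm n hx fun f hf => ?_
  rw [hn, Submodule.zero_eq_bot, Submodule.mem_bot] at hf
  rw [hf]
  exact H.zero_mem

end GradedLCA

namespace GradedLCAModule

variable {L : Type} [AddCommGroup L] [Module ℂ L] {C : GradedLCA L}
variable {M : Type} [AddCommGroup M] [Module ℂ M] {ρ : GradedLCAModule C M}

/-- The subspaces among which a maximal one is shown to be all of `L`: graded `ℂ[∂]`-submodules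
containing `L₀` and acting nilpotently both on `L` and on `M`. They need not be subalgebras. -/
structure IsNilpotentlyActing (ρ : GradedLCAModule C M) (H : Submodule ℂ L) : Prop where
  mem_invtSubmodule : H ∈ Module.End.invtSubmodule C.D
  le_iSup_inf : H ≤ ⨆ i, H ⊓ C.G i
  G_zero_le : C.G 0 ≤ H
  isNilpotent_adjoint : IsNilpotent (C.adjoint.opSpan H)
  isNilpotent : IsNilpotent (ρ.opSpan H)

theorem isNilpotentlyActing_G_zero (hroot : C.Rootless) (hwl : ρ.Weightless)
    (hfinL : {i | C.G i ≠ ⊥}.Finite) (hfinM : {j | ρ.GM j ≠ ⊥}.Finite) :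
    ρ.IsNilpotentlyActing (C.G 0) where
  mem_invtSubmodule := C.dGrade 0
  le_iSup_inf := le_iSup_of_le 0 (by simp)
  G_zero_le := le_rfl
  isNilpotent_adjoint := hroot.adjoint_weightless.isNilpotent_opSpan_G_zero hfinL
  isNilpotent := hwl.isNilpotent_opSpan_G_zero hfinM

theorem IsNilpotentlyActing.sup_normalizer_inf {H : Submodule ℂ L} (hH : ρ.IsNilpotentlyActing H)
    (hfinL : {i | C.G i ≠ ⊥}.Finite) (hfinM : {j | ρ.GM j ≠ ⊥}.Finite) {i : ℤ} (hi : i ≠ 0) :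
    ρ.IsNilpotentlyActing (H ⊔ C.normalizer H ⊓ C.G i) where
  mem_invtSubmodule := Module.End.invtSubmodule.sup_mem hH.mem_invtSubmodule <|
    Module.End.invtSubmodule.inf_mem
      (LieConformalAlgebra.normalizer_mem_invtSubmodule hH.mem_invtSubmodule) (C.dGrade i)
  le_iSup_inf := sup_le
    (hH.le_iSup_inf.trans (iSup_mono fun _ => inf_le_inf_right _ le_sup_left))
    (le_iSup_of_le i (le_inf le_sup_right inf_le_right))
  G_zero_le := le_sup_of_le_left hH.G_zero_le
  isNilpotent_adjoint := LCAModule.isNilpotent_opSpan_sup inf_le_left hH.isNilpotent_adjoint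
    (isNilpotent_opSpan_of_le_G hfinL hi inf_le_right)
  isNilpotent := LCAModule.isNilpotent_opSpan_sup inf_le_left hH.isNilpotent
    (isNilpotent_opSpan_of_le_G hfinM hi inf_le_right)

end GradedLCAModule

theorem rootless_weightless_nilpotent_general
    {L : Type} [AddCommGroup L] [Module ℂ L] {M : Type} [AddCommGroup M] [Module ℂ M]
    (C : GradedLCA L) (hroot : C.Rootless)
    (hfgL : C.toLieConformalAlgebra.FGPolyModule)
    (ρ : GradedLCAModule C M) (hfinM : {j | ρ.GM j ≠ ⊥}.Finite) (hwl : ρ.Weightless) :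
    ρ.toLCAModule.Nilpotent := by
  have hfinL : {i | C.G i ≠ ⊥}.Finite := C.adjoint.finite_setOf_GM_ne_bot hfgL
  have hwf : WellFoundedGT (Module.End.invtSubmodule C.D) := wellFoundedGT_invtSubmodule hfgL
  obtain ⟨⟨H, _⟩, hH, hmax⟩ := hwf.wf.has_min
    {H : Module.End.invtSubmodule C.D | ρ.IsNilpotentlyActing (H : Submodule ℂ L)}
    ⟨⟨C.G 0, C.dGrade 0⟩, GradedLCAModule.isNilpotentlyActing_G_zero hroot hwl hfinL hfinM⟩
  have hnorm (i : ℤ) : C.normalizer H ⊓ C.G i ≤ H := by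
    obtain rfl | hi := eq_or_ne i 0
    · exact inf_le_right.trans hH.G_zero_le
    have hH' := hH.sup_normalizer_inf hfinL hfinM hi
    by_contra hlt
    exact hmax ⟨_, hH'.mem_invtSubmodule⟩ hH' (Subtype.mk_lt_mk.2 (left_lt_sup.2 hlt))
  obtain rfl : H = ⊤ :=
    GradedLCA.eq_top_of_normalizer_inf_le hH.le_iSup_inf hH.isNilpotent_adjoint hnorm
  exact LCAModule.nilpotent_of_isNilpotent_opSpan_top hH.isNilpotent

/-- if `L` is a rootless `ℤ`-graded Lie conformal algebra which is
finitely generated as a `ℂ[∂]`-module, and `M` is a graded `L`-module, finitely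
generated as a `ℂ[∂]`-module and weightless, then `M` is a nilpotent
`L`-module. -/
theorem rootless_weightless_nilpotent
    {L : Type} [AddCommGroup L] [Module ℂ L] {M : Type} [AddCommGroup M] [Module ℂ M]
    (C : GradedLCA L) (hroot : C.Rootless)
    (hfgL : C.toLieConformalAlgebra.FGPolyModule)
    (ρ : GradedLCAModule C M) (hfgM : ρ.toLCAModule.FGPoly) (hwl : ρ.Weightless) :
    ρ.toLCAModule.Nilpotent := by
  exact rootless_weightless_nilpotent_general C hroot hfgL ρ
    (GradedLCAModule.finite_setOf_GM_ne_bot hfgM) hwl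
end
end

section
/- Let L = ⊕_{i∈ℤ} L_i be a ℤ-graded Lie conformal algebra that is generated, as a Lie conformal algebra, by ⊕_{|i|≤d} L_i for some positive integer d, and let M be a graded L-module that is finitely generated as an L-module and has infinite rank as a ℂ[∂]-module. Then e(M) ≥ 1/d. -/
open scoped BigOperators Classical ENNReal
open Polynomial

noncomputable section

/-!
Fix `n₀` such that `M^{n₀}` generates `M`, and let `n ≥ n₀`. If every homogeneous element of degree
`i`, `n < |i| ≤ n + d`, is `ℂ[∂]`-torsion, then `M^{n + d}` is a submodule: `L_i` with `|i| ≤ d`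
maps `M^n` into `M^{n + d}` and kills the torsion elements, and the elements of `L` that preserve a
given subspace form a subalgebra. Hence `M^{n + d} = M`, which has infinite rank. Otherwise some
homogeneous element of these degrees is not torsion, and it is `ℂ[∂]`-independent of `M^n`. In both
cases the rank of `M^{n + d}` exceeds that of `M^n` by at least one, so that the rank of
`M^{n₀ + k d}` is at least `k`.
-/

section Polynomial

/-- Over an algebraically closed field every nonzero polynomial is a product of linear factors, and
these can be cancelled one at a time. -/
lemma mem_of_aeval_apply_mem {K M : Type*} [Field K] [IsAlgClosed K] [AddCommGroup M] [Module K M]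
    {D : Module.End K M} {N : Submodule K M} (hN : ∀ (α : K) (m : M), D m - α • m ∈ N → m ∈ N)
    {q : K[X]} (hq : q ≠ 0) {m : M} (hm : aeval D q m ∈ N) : m ∈ N := by
  have cancel_linear_factors (s : Multiset K)
      (hs : aeval D (s.map (X - Polynomial.C ·)).prod m ∈ N) : m ∈ N := by
    induction s using Multiset.induction_on with
    | empty => simpa using hs
    | cons α s ih =>
      refine ih (hN α _ ?_)
      simpa [Module.algebraMap_end_apply] using hs
  refine cancel_linear_factors q.roots ?_
  rw [(IsAlgClosed.splits q).eq_prod_roots, map_mul, aeval_C, Module.End.mul_apply,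
    Module.algebraMap_end_apply] at hm
  exact (N.smul_mem_iff (leadingCoeff_ne_zero.mpr hq)).mp hm

end Polynomial

section PolyRank

variable {M : Type} [AddCommGroup M] [Module ℂ M] {D : M →ₗ[ℂ] M}

/-- The element `m` is torsion for the `ℂ[∂]`-module structure on `M` in which `∂` acts as `D`. -/
def IsPolyTorsion (D : M →ₗ[ℂ] M) (m : M) : Prop :=
  ∃ q : ℂ[X], q ≠ 0 ∧ aeval D q m = 0

lemma sum_smul_iterate_eq_aeval (D : M →ₗ[ℂ] M) (q : ℂ[X]) (m : M) :
    (q.sum fun t c => c • (⇑D)^[t] m) = aeval D q m := by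
  simp only [aeval_endomorphism, Module.End.pow_apply]

lemma polyIndep_iff_aeval {r : ℕ} {v : Fin r → M} :
    polyIndep D v ↔ ∀ q : Fin r → ℂ[X], ∑ k, aeval D (q k) (v k) = 0 → ∀ k, q k = 0 := by
  simp only [polyIndep, sum_smul_iterate_eq_aeval]

lemma polyIndep.cons {P Q : Submodule ℂ M} (hP : P ∈ Module.End.invtSubmodule D)
    (hQ : Q ∈ Module.End.invtSubmodule D) (hPQ : Disjoint P Q) {m : M} (hmP : m ∈ P)
    (hm : ¬ IsPolyTorsion D m) {r : ℕ} {v : Fin r → M} (hvQ : ∀ k, v k ∈ Q)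
    (hv : polyIndep D v) : polyIndep D (Fin.cons m v : Fin (r + 1) → M) := by
  rw [polyIndep_iff_aeval] at hv ⊢
  intro q hq
  simp only [Fin.sum_univ_succ, Fin.cons_zero, Fin.cons_succ] at hq
  have head_mem : aeval D (q 0) m ∈ P := aeval_apply_smul_mem_of_le_comap hmP _ _ hP
  have tail_mem : ∑ k : Fin r, aeval D (q k.succ) (v k) ∈ Q :=
    Q.sum_mem fun k _ => aeval_apply_smul_mem_of_le_comap (hvQ k) _ _ hQ
  have head_eq_zero : aeval D (q 0) m = 0 := by
    refine Submodule.disjoint_def.mp hPQ _ head_mem ?_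
    rw [eq_neg_of_add_eq_zero_left hq]
    exact Q.neg_mem tail_mem
  rw [head_eq_zero, zero_add] at hq
  exact Fin.cases (by_contra fun h => hm ⟨q 0, h, head_eq_zero⟩) (hv _ hq)

lemma natCast_le_polyRank {N : Submodule ℂ M} {r : ℕ} {v : Fin r → M} (hvN : ∀ k, v k ∈ N)
    (hv : polyIndep D v) : (r : ℕ∞) ≤ polyRank D N :=
  le_iSup₂ (f := fun (r : ℕ) _ => (r : ℕ∞)) r ⟨v, hvN, hv⟩

lemma polyRank_mono {N N' : Submodule ℂ M} (h : N ≤ N') : polyRank D N ≤ polyRank D N' :=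
  biSup_mono fun _ ⟨v, hvN, hv⟩ => ⟨v, fun k => h (hvN k), hv⟩

lemma polyRank_top_eq_top (h : ∀ r : ℕ, ∃ v : Fin r → M, polyIndep D v) :
    polyRank D ⊤ = ⊤ := by
  refine ENat.eq_top_iff_forall_ge.mpr fun r => ?_
  obtain ⟨v, hv⟩ := h r
  exact natCast_le_polyRank (fun _ => Submodule.mem_top) hv

lemma polyRank_add_one_le_polyRank_sup {P Q : Submodule ℂ M}
    (hP : P ∈ Module.End.invtSubmodule D) (hQ : Q ∈ Module.End.invtSubmodule D)
    (hPQ : Disjoint P Q) {m : M} (hmP : m ∈ P) (hm : ¬ IsPolyTorsion D m) :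
    polyRank D Q + 1 ≤ polyRank D (P ⊔ Q) := by
  have exists_rank : {r : ℕ | ∃ v : Fin r → M, (∀ k, v k ∈ Q) ∧ polyIndep D v}.Nonempty :=
    ⟨0, Fin.elim0, (·.elim0), fun _ _ => (·.elim0)⟩
  rw [polyRank, ENat.biSup_add exists_rank]
  refine iSup₂_le fun r ⟨v, hvQ, hv⟩ => ?_
  exact_mod_cast natCast_le_polyRank
    (Fin.cases (Submodule.mem_sup_left hmP) fun k => Submodule.mem_sup_right (hvQ k))
    (hv.cons hP hQ hPQ hmP hm hvQ)

end PolyRank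

namespace LCAModule

variable {L : Type} [AddCommGroup L] [Module ℂ L] {C : LieConformalAlgebra L}
variable {M : Type} [AddCommGroup M] [Module ℂ M]

/-- Sesquilinearity gives `(n + 1) a_(n) m = a_(n+1) ((∂ - α) m) - (∂ - α) (a_(n+1) m)`, so the
vanishing of `a_(n) m` descends from large `n`. -/
lemma act_eq_zero_of_act_DM_sub_smul (ρ : LCAModule C M) {a : L} {α : ℂ} {m : M}
    (h : ∀ n, ρ.act n a (ρ.DM m - α • m) = 0) (n : ℕ) : ρ.act n a m = 0 := by
  have descend (k : ℕ) (hk : ρ.act (k + 1) a m = 0) : ρ.act k a m = 0 := by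
    have hsmul : ((k + 1 : ℕ) : ℂ) • ρ.act k a m = 0 := by
      simpa [ρ.sesq', hk] using h (k + 1)
    exact (smul_eq_zero.mp hsmul).resolve_left (Nat.cast_ne_zero.mpr k.succ_ne_zero)
  obtain ⟨N, hN⟩ := ρ.bound a m
  exact Nat.decreasingInduction' (fun k _ _ => descend k) (Nat.le_add_right n N)
    (hN _ (Nat.le_add_left N n))

lemma act_eq_zero_of_isPolyTorsion (ρ : LCAModule C M) {m : M} (hm : IsPolyTorsion ρ.DM m)
    (n : ℕ) (a : L) : ρ.act n a m = 0 := by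
  obtain ⟨q, hq, hqm⟩ := hm
  have mem_ker : m ∈ ⨅ n, LinearMap.ker (ρ.act n a) := by
    refine mem_of_aeval_apply_mem (D := ρ.DM) (fun α x hx => ?_) hq (hqm ▸ zero_mem _)
    simp only [Submodule.mem_iInf, LinearMap.mem_ker] at hx ⊢
    exact ρ.act_eq_zero_of_act_DM_sub_smul hx
  exact (Submodule.mem_iInf _).mp mem_ker n

/-- The elements of `L` all of whose `n`-th actions preserve the subspace `N`. -/
def stabilizer (ρ : LCAModule C M) (N : Submodule ℂ M) : Submodule ℂ L where
  carrier := {a | ∀ n, ∀ m ∈ N, ρ.act n a m ∈ N}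
  add_mem' ha hb n m hm := by
    rw [map_add]
    exact N.add_mem (ha n m hm) (hb n m hm)
  zero_mem' n m _ := by simp
  smul_mem' c a ha n m hm := by
    rw [map_smul]
    exact N.smul_mem c (ha n m hm)

lemma act_prd (ρ : LCAModule C M) (p q : ℕ) (a b : L) (m : M) :
    ρ.act q (C.prd p a b) m = ρ.act p a (ρ.act q b m) - ρ.act q b (ρ.act p a m)
      - ∑ j ∈ Finset.range p, (Nat.choose p j : ℂ) • ρ.act (p + q - j) (C.prd j a b) m := by
  rw [ρ.comm, Finset.sum_range_succ]
  simp

lemma isSubalgebra_stabilizer (ρ : LCAModule C M) (N : Submodule ℂ M) :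
    C.IsSubalgebra (ρ.stabilizer N) := by
  refine ⟨fun a ha n m hm => ?_, fun p a ha b hb => ?_⟩
  · rw [ρ.sesq]
    exact N.smul_mem _ (ha _ m hm)
  · induction p using Nat.strong_induction_on with
    | _ p ih =>
      intro q m hm
      rw [act_prd]
      refine N.sub_mem (N.sub_mem (ha _ _ (hb _ _ hm)) (hb _ _ (ha _ _ hm))) ?_
      exact N.sum_mem fun j hj => N.smul_mem _ (ih j (Finset.mem_range.mp hj) _ m hm)

end LCAModule

/-- `L` is generated, as a Lie conformal algebra, by `⊕_{|i| ≤ d} L_i`. -/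
def GradedLCA.GeneratedInDegreesLE {L : Type} [AddCommGroup L] [Module ℂ L] (C : GradedLCA L)
    (d : ℕ) : Prop :=
  ∀ N : Submodule ℂ L, C.toLieConformalAlgebra.IsSubalgebra N →
    (∀ i : ℤ, |i| ≤ (d : ℤ) → C.G i ≤ N) → N = ⊤

namespace GradedLCAModule

variable {L : Type} [AddCommGroup L] [Module ℂ L] {C : GradedLCA L}
variable {M : Type} [AddCommGroup M] [Module ℂ M]

/-- `M` is generated, as an `L`-module, by `Mⁿ = ⊕_{|i| ≤ n} M_i`. -/
def GeneratedInDegreesLE (ρ : GradedLCAModule C M) (n : ℕ) : Prop :=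
  ∀ N : Submodule ℂ M, ρ.toLCAModule.IsSub N → ρ.seg n ≤ N → N = ⊤

lemma GM_le_seg (ρ : GradedLCAModule C M) {n : ℕ} {i : ℤ} (hi : |i| ≤ n) : ρ.GM i ≤ ρ.seg n :=
  le_iSup₂_of_le i hi le_rfl

lemma seg_mono (ρ : GradedLCAModule C M) : Monotone ρ.seg :=
  fun _ _ h => iSup₂_le fun _ hi => ρ.GM_le_seg (hi.trans (mod_cast h))

lemma GeneratedInDegreesLE.mono {ρ : GradedLCAModule C M} {n n' : ℕ}
    (hρ : ρ.GeneratedInDegreesLE n) (h : n ≤ n') : ρ.GeneratedInDegreesLE n' :=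
  fun N hN hnN => hρ N hN ((ρ.seg_mono h).trans hnN)

lemma seg_mem_invtSubmodule (ρ : GradedLCAModule C M) (n : ℕ) :
    ρ.seg n ∈ Module.End.invtSubmodule ρ.DM :=
  (Module.End.mem_invtSubmodule _).mpr <|
    iSup₂_le fun i hi m hm => ρ.GM_le_seg hi (ρ.dGrade i m hm)

lemma disjoint_GM_seg (ρ : GradedLCAModule C M) {n : ℕ} {i : ℤ} (hi : n < |i|) :
    Disjoint (ρ.GM i) (ρ.seg n) := by
  refine (ρ.internal.submodule_iSupIndep i).mono_right (iSup₂_mono' fun j hj => ?_)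
  exact ⟨j, fun hji => absurd hi (hji ▸ hj.not_gt), le_rfl⟩

lemma iSup_seg (ρ : GradedLCAModule C M) : ⨆ n, ρ.seg n = ⊤ := by
  rw [eq_top_iff, ← ρ.internal.submodule_iSup_eq_top]
  exact iSup_le fun i => le_iSup_of_le i.natAbs (ρ.GM_le_seg (Int.abs_eq_natAbs i).le)

lemma exists_finset_subset_seg (ρ : GradedLCAModule C M) (s : Finset M) :
    ∃ n, (s : Set M) ⊆ ρ.seg n := by
  have exists_mem_seg (m : M) : ∃ n, m ∈ ρ.seg n := by
    rw [← Submodule.mem_iSup_of_directed _ ρ.seg_mono.directed_le, ρ.iSup_seg]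
    exact Submodule.mem_top
  choose deg hdeg using exists_mem_seg
  exact ⟨s.sup deg, fun m hm => ρ.seg_mono (Finset.le_sup hm) (hdeg m)⟩

lemma exists_generatedInDegreesLE (ρ : GradedLCAModule C M) (hfg : ρ.toLCAModule.FG) :
    ∃ n, ρ.GeneratedInDegreesLE n := by
  obtain ⟨s, hs⟩ := hfg
  obtain ⟨n, hn⟩ := ρ.exists_finset_subset_seg s
  exact ⟨n, fun N hN hnN => hs N hN (hn.trans hnN)⟩

lemma G_le_stabilizer_seg (ρ : GradedLCAModule C M) {n d : ℕ}
    (htor : ∀ j : ℤ, n < |j| → |j| ≤ (n + d : ℕ) → ∀ m ∈ ρ.GM j, IsPolyTorsion ρ.DM m)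
    {i : ℤ} (hi : |i| ≤ d) : C.G i ≤ ρ.toLCAModule.stabilizer (ρ.seg (n + d)) := by
  intro a ha k
  suffices ρ.seg (n + d) ≤ (ρ.seg (n + d)).comap (ρ.act k a) from this
  refine iSup₂_le fun j hj m hm => ?_
  rw [Submodule.mem_comap]
  rcases le_or_gt |j| (n : ℤ) with hjn | hjn
  · have hij : |i + j| ≤ (n + d : ℕ) := (abs_add_le i j).trans (by push_cast; omega)
    exact ρ.GM_le_seg hij (ρ.actGrade i j k a ha m hm)
  · rw [ρ.act_eq_zero_of_isPolyTorsion (htor j hjn hj m hm)]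
    exact zero_mem _

lemma seg_add_eq_top_of_isPolyTorsion (ρ : GradedLCAModule C M) {n d : ℕ}
    (hC : C.GeneratedInDegreesLE d) (hρ : ρ.GeneratedInDegreesLE n)
    (htor : ∀ j : ℤ, n < |j| → |j| ≤ (n + d : ℕ) → ∀ m ∈ ρ.GM j, IsPolyTorsion ρ.DM m) :
    ρ.seg (n + d) = ⊤ := by
  have stabilizer_eq_top : ρ.toLCAModule.stabilizer (ρ.seg (n + d)) = ⊤ :=
    hC _ (ρ.isSubalgebra_stabilizer _) fun _ => ρ.G_le_stabilizer_seg htor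
  have act_mem (k : ℕ) (a : L) : ∀ m ∈ ρ.seg (n + d), ρ.act k a m ∈ ρ.seg (n + d) :=
    stabilizer_eq_top.ge (Submodule.mem_top : a ∈ ⊤) k
  exact hρ _ ⟨ρ.seg_mem_invtSubmodule _, act_mem⟩ (ρ.seg_mono (Nat.le_add_right n d))

lemma polyRank_seg_add_one_le (ρ : GradedLCAModule C M) {n d : ℕ}
    (hC : C.GeneratedInDegreesLE d) (hρ : ρ.GeneratedInDegreesLE n)
    (hinf : ∀ r : ℕ, ∃ v : Fin r → M, polyIndep ρ.DM v) :
    polyRank ρ.DM (ρ.seg n) + 1 ≤ polyRank ρ.DM (ρ.seg (n + d)) := by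
  by_cases htor : ∀ j : ℤ, n < |j| → |j| ≤ (n + d : ℕ) → ∀ m ∈ ρ.GM j, IsPolyTorsion ρ.DM m
  · rw [ρ.seg_add_eq_top_of_isPolyTorsion hC hρ htor, polyRank_top_eq_top hinf]
    exact le_top
  · push Not at htor
    obtain ⟨i, hni, hid, m, hm, hmtor⟩ := htor
    calc polyRank ρ.DM (ρ.seg n) + 1
        ≤ polyRank ρ.DM (ρ.GM i ⊔ ρ.seg n) :=
          polyRank_add_one_le_polyRank_sup (ρ.dGrade i) (ρ.seg_mem_invtSubmodule n)
            (ρ.disjoint_GM_seg hni) hm hmtor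
      _ ≤ polyRank ρ.DM (ρ.seg (n + d)) :=
          polyRank_mono (sup_le (ρ.GM_le_seg hid) (ρ.seg_mono (Nat.le_add_right n d)))

lemma natCast_le_polyRank_seg (ρ : GradedLCAModule C M) {n d : ℕ}
    (hC : C.GeneratedInDegreesLE d) (hρ : ρ.GeneratedInDegreesLE n)
    (hinf : ∀ r : ℕ, ∃ v : Fin r → M, polyIndep ρ.DM v) (k : ℕ) :
    (k : ℕ∞) ≤ polyRank ρ.DM (ρ.seg (n + k * d)) := by
  induction k with
  | zero => simp
  | succ k ih =>
    rw [Nat.cast_succ, Nat.succ_mul, ← add_assoc]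
    exact (add_le_add_left ih 1).trans
      (ρ.polyRank_seg_add_one_le hC (hρ.mono (Nat.le_add_right n _)) hinf)

end GradedLCAModule

section Growth

open Filter

/-- For `c < 1 / d` the choice `k = ⌈c n⌉` satisfies `n₀ + k d ≤ n` for all large `n`. -/
lemma inv_le_liminf_div_of_natCast_le {f : ℕ → ℝ≥0∞} {n₀ d : ℕ}
    (hf : ∀ k n : ℕ, n₀ + k * d ≤ n → (k : ℝ≥0∞) ≤ f n) :
    (d : ℝ≥0∞)⁻¹ ≤ atTop.liminf fun n : ℕ => f n / n := by
  refine ENNReal.le_of_forall_nnreal_lt fun c hc => le_liminf_of_le (by isBoundedDefault) ?_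
  have hcd : (c : ℝ) * d < 1 := by
    have := ENNReal.mul_lt_of_lt_div (by simpa using hc : (c : ℝ≥0∞) < 1 / d)
    exact_mod_cast this
  have gap_tendsto : Tendsto (fun n : ℕ => (1 - (c : ℝ) * d) * n) atTop atTop :=
    tendsto_natCast_atTop_atTop.const_mul_atTop (sub_pos.mpr hcd)
  filter_upwards [gap_tendsto.eventually_ge_atTop (n₀ + d), eventually_gt_atTop 0] with n hgap hn
  have hceil : n₀ + ⌈c * n⌉₊ * d ≤ n := by
    have : (⌈c * n⌉₊ : ℝ) ≤ c * n + 1 := mod_cast (Nat.ceil_lt_add_one (zero_le : 0 ≤ c * n)).le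
    have : (⌈c * n⌉₊ : ℝ) * d ≤ (c * n + 1) * d := by gcongr
    have : (n₀ : ℝ) + ⌈c * n⌉₊ * d ≤ n := by linarith
    exact_mod_cast this
  rw [ENNReal.le_div_iff_mul_le (by simp [hn.ne']) (by simp)]
  calc (c : ℝ≥0∞) * n ≤ (⌈c * n⌉₊ : ℝ≥0∞) := mod_cast Nat.le_ceil (c * (n : NNReal))
    _ ≤ f n := hf _ n hceil

end Growth

theorem eM_ge_one_div_d_general
    {L : Type} [AddCommGroup L] [Module ℂ L] {M : Type} [AddCommGroup M] [Module ℂ M]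
    (C : GradedLCA L) (d : ℕ) (hgen : C.GeneratedInDegreesLE d)
    (ρ : GradedLCAModule C M) (hfin : ∃ n, ρ.GeneratedInDegreesLE n)
    (hinf : ∀ r : ℕ, ∃ v : Fin r → M, polyIndep ρ.DM v) :
    ((d : ℝ≥0∞))⁻¹ ≤ ρ.eM := by
  obtain ⟨n₀, hn₀⟩ := hfin
  refine inv_le_liminf_div_of_natCast_le (n₀ := n₀) fun k n hn => ?_
  have rank_ge : (k : ℕ∞) ≤ polyRank ρ.DM (ρ.seg n) :=
    (ρ.natCast_le_polyRank_seg hgen hn₀ hinf k).trans (polyRank_mono (ρ.seg_mono hn))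
  exact_mod_cast ENat.toENNReal_le.mpr rank_ge

/-- if `L` is generated by `⊕_{|i| ≤ d} Lᵢ` and `M` is a graded
`L`-module, finitely generated as an `L`-module and of infinite rank over
`ℂ[∂]`, then `e(M) ≥ 1/d`. -/
theorem eM_ge_one_div_d
    {L : Type} [AddCommGroup L] [Module ℂ L] {M : Type} [AddCommGroup M] [Module ℂ M]
    (C : GradedLCA L) (d : ℕ) (hd : 1 ≤ d)
    (hgen : ∀ N : Submodule ℂ L, C.toLieConformalAlgebra.IsSubalgebra N →
      (∀ i : ℤ, |i| ≤ (d : ℤ) → C.G i ≤ N) → N = ⊤)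
    (ρ : GradedLCAModule C M) (hfg : ρ.toLCAModule.FG)
    (hinf : ∀ r : ℕ, ∃ v : Fin r → M, polyIndep ρ.DM v) :
    ((d : ℝ≥0∞))⁻¹ ≤ ρ.eM :=
  eM_ge_one_div_d_general C d hgen ρ (ρ.exists_generatedInDegreesLE hfg) hinf
end
end
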